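/- arXiv:0801.0349 — 3 statements merged into one kernel-verified Lean document; each statement's English description precedes it below -/
import Mathlib

section
/- Programs are finite binary words $p\in\{0,1\}^*$, of length $|p|$. For $f,g:\mathbb N\to\mathbb N$ write $f\le_{ct}g$ if $\exists c\,\forall n\ f(n)\le g(n)+c$, and $g>_{ct}f$ if $f\le_{ct}g$ and $\forall c\,\exists n\ f(n)<g(n)-c$. Let $\emptyset^{(0)}=\emptyset$ and let $\emptyset^{(i+1)}$ be the jump of $\emptyset^{(i)}$, i.e. the set of $e$ such that the $e$-th function partial recursive in $\emptyset^{(i)}$ converges on $e$. For a partial function $W:\{0,1\}^*\rightharpoonup\mathbb N$ put $K_W(n)=\min\{|p| : W(p)=n\}$, with $\min\emptyset=+\infty$. Let $K^i=K_U$, where $U$ is any function partial recursive in $\emptyset^{(i)}$ that is optimal, i.e. $K_U\le_{ct}K_W$ for every $W:\{0,1\}^*\rightharpoonup\mathbb N$ partial recursive in $\emptyset^{(i)}$ (so $K_U$ is finite everywhere). Let $K^{i,\infty}(n)=\min\{|p| : \{t : V(p,t)\text{ converges}\}\text{ is finite with exactly } n \text{ elements}\}$, where $V:\{0,1\}^*\times\mathbb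 N\rightharpoonup\mathbb N$ is any function that is strongly universal among those partial recursive in $\emptyset^{(i)}$: there is a map $\mathrm{comp}:\{0,1\}^*\times\{0,1\}^*\to\{0,1\}^*$, recursive in $\emptyset^{(i)}$, such that the functions $(p,t)\mapsto V(\mathrm{comp}(e,p),t)$, $e\in\{0,1\}^*$, are exactly the functions $\{0,1\}^*\times\mathbb N\rightharpoonup\mathbb N$ partial recursive in $\emptyset^{(i)}$, and for each $e$ there is a constant $c(e)$ with $|\mathrm{comp}(e,p)|\le|p|+c(e)$ for all $p$. (Convergence of $V(p,t)$ reads as "program $p$ emits a symbol $1$ at step $t$ of its possibly infinite computation".) Then, for every $i\ge 0$ and every such choice of $U$ and $V$ at each level, $K^i>_{ct}K^{i,\infty}$ and $K^{i,\infty}>_{ct}K^{i+1}$. In particular, writing $K=K^0$, $K^\infty=K^{0,\infty}$, $K'=K^1$, $K'^\infty=K^{1,\infty}$, $K''=K^2$, one has $K>_{ct}K^\infty>_{ct}K'>_{ct}K'^\infty>_{ct}K''>_{ct}\cdots$. -/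
/-- Programs are finite binary words. -/
abbrev Word : Type := List Bool

/-- `f ≤ct g` : `∃ c ∀ n, f(n) ≤ g(n) + c`. Complexities are `ℕ∞`-valued, with `min ∅ = ⊤`;
the constant `c` is a natural number. -/
def LeCt (f g : ℕ → ℕ∞) : Prop := ∃ c : ℕ, ∀ n : ℕ, f n ≤ g n + c

/-- `g >ct f` : `f ≤ct g` and `∀ c ∃ n, f(n) < g(n) - c`. -/
def GtCt (g f : ℕ → ℕ∞) : Prop := LeCt f g ∧ ∀ c : ℕ, ∃ n : ℕ, f n + c < g n

open Classical in
/-- The characteristic function of a set of integers, used as an oracle. -/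
noncomputable def chi (A : Set ℕ) : ℕ →. ℕ :=
  fun n => Part.some (if n ∈ A then 1 else 0)

/-- Codes for partial recursive functions relative to an oracle:
the constructors of `Nat.Partrec.Code` plus an `oracle` constructor. -/
inductive OCode : Type
  | zero : OCode
  | succ : OCode
  | left : OCode
  | right : OCode
  | oracle : OCode
  | pair : OCode → OCode → OCode
  | comp : OCode → OCode → OCode
  | prec : OCode → OCode → OCode
  | rfind' : OCode → OCode

/-- Evaluation of an oracle code relative to the oracle `O`. -/
def OCode.evalO (O : ℕ →. ℕ) : OCode → ℕ →. ℕ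
  | .zero => pure 0
  | .succ => Nat.succ
  | .left => ↑fun n : ℕ => n.unpair.1
  | .right => ↑fun n : ℕ => n.unpair.2
  | .oracle => O
  | .pair cf cg => fun n => Nat.pair <$> cf.evalO O n <*> cg.evalO O n
  | .comp cf cg => fun n => cg.evalO O n >>= cf.evalO O
  | .prec cf cg =>
    Nat.unpaired fun a n =>
      n.rec (cf.evalO O a) fun y IH => do
        let i ← IH
        cg.evalO O (Nat.pair a (Nat.pair y i))
  | .rfind' cf =>
    Nat.unpaired fun a m =>
      (Nat.rfind fun n => (fun m => m = 0) <$> cf.evalO O (Nat.pair a (n + m))).map (· + m)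

/-- A (bijective) Gödel numbering of oracle codes. -/
def encodeOCode : OCode → ℕ
  | .zero => 0
  | .succ => 1
  | .left => 2
  | .right => 3
  | .oracle => 4
  | .pair a b => 4 * Nat.pair (encodeOCode a) (encodeOCode b) + 5
  | .comp a b => 4 * Nat.pair (encodeOCode a) (encodeOCode b) + 6
  | .prec a b => 4 * Nat.pair (encodeOCode a) (encodeOCode b) + 7
  | .rfind' a => 4 * encodeOCode a + 8

/-- The jump of `A` : the halting problem
`{e : the e-th function partial recursive in A converges on e}`. -/
def jump (A : Set ℕ) : Set ℕ :=
  {e : ℕ | ∃ c : OCode, encodeOCode c = e ∧ (c.evalO (chi A) e).Dom}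

/-- `∅^(i)` : the `i`-th jump of the empty set. -/
def emptyJump : ℕ → Set ℕ
  | 0 => ∅
  | i + 1 => jump (emptyJump i)

/-- `K_V(n) = min {|p| : V(p) = n}` for a partial function `V : {0,1}* ⇀ ℕ`,
with value `⊤` when there is no such `p`. -/
noncomputable def KOf (V : Word →. ℕ) (n : ℕ) : ℕ∞ :=
  ⨅ (p : Word) (_ : n ∈ V p), (p.length : ℕ∞)

/-- `U` is optimal among the functions `{0,1}* ⇀ ℕ` partial recursive in `A`. -/
def OptimalIn (A : Set ℕ) (U : Word →. ℕ) : Prop :=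
  RecursiveIn {chi A} U ∧ ∀ W : Word →. ℕ, RecursiveIn {chi A} W → LeCt (KOf U) (KOf W)

/-- `V : {0,1}* × ℕ ⇀ ℕ` is strongly universal among the functions partial recursive in `A`:
for a compiler `comp` recursive in `A`, the functions `V_e(p,t) = V(comp(e,p),t)` enumerate the
class of all functions `{0,1}* × ℕ ⇀ ℕ` partial recursive in `A`, and for each `e` there is a
constant `c(e)` with `|comp(e,p)| ≤ |p| + c(e)` for all `p`. -/
def StronglyUniversal₂In (A : Set ℕ) (V : Word → ℕ →. ℕ) : Prop :=
  RecursiveIn₂ {chi A} V ∧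
    ∃ comp : Word → Word → Word, ComputableIn₂ {chi A} comp ∧
      (∀ e : Word, RecursiveIn₂ {chi A} fun p => V (comp e p)) ∧
      (∀ W : Word → ℕ →. ℕ, RecursiveIn₂ {chi A} W →
        ∃ e : Word, ∀ (p : Word) (t : ℕ), V (comp e p) t = W p t) ∧
      (∀ e : Word, ∃ c : ℕ, ∀ p : Word, (comp e p).length ≤ p.length + c)

/-- Complexity with possibly infinite computations and unary output: convergence of `V(p,t)`
reads as "program `p` emits a symbol `1` at step `t`", and the value at `n` is the shortest length
of a program that emits exactly `n` symbols in all (`⊤` when there is none). -/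
noncomputable def KInfOf (V : Word → ℕ →. ℕ) (n : ℕ) : ℕ∞ :=
  ⨅ (p : Word) (_ : {t : ℕ | (V p t).Dom}.Finite ∧ {t : ℕ | (V p t).Dom}.ncard = n),
    (p.length : ℕ∞)

/-- The oracle codes enumerate exactly the functions partial recursive in the oracle. -/
theorem OCode.exists_code {O f : ℕ →. ℕ} :
    Nat.RecursiveIn {O} f ↔ ∃ c : OCode, c.evalO O = f := by
  constructor
  · intro h
    induction h with
    | zero => exact ⟨.zero, rfl⟩
    | succ => exact ⟨.succ, rfl⟩
    | left => exact ⟨.left, rfl⟩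
    | right => exact ⟨.right, rfl⟩
    | oracle g hg => exact ⟨.oracle, by simpa [OCode.evalO] using hg.symm⟩
    | pair _ _ h1 h2 => obtain ⟨a, rfl⟩ := h1; obtain ⟨b, rfl⟩ := h2; exact ⟨.pair a b, rfl⟩
    | comp _ _ h1 h2 => obtain ⟨a, rfl⟩ := h1; obtain ⟨b, rfl⟩ := h2; exact ⟨.comp a b, rfl⟩
    | prec _ _ h1 h2 => obtain ⟨a, rfl⟩ := h1; obtain ⟨b, rfl⟩ := h2; exact ⟨.prec a b, rfl⟩
    | rfind _ h1 =>
      obtain ⟨a, rfl⟩ := h1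
      refine ⟨.comp (.rfind' a) (.pair (.pair .left .right) .zero), ?_⟩
      funext n
      simp [OCode.evalO, Seq.seq, pure, PFun.pure, Part.map_id']
  · rintro ⟨c, rfl⟩
    induction c with
    | zero => exact .zero
    | succ => exact .succ
    | left => exact .left
    | right => exact .right
    | oracle => exact .oracle _ rfl
    | pair _ _ h1 h2 => exact .pair h1 h2
    | comp _ _ h1 h2 => exact .comp h1 h2
    | prec _ _ h1 h2 => exact .prec h1 h2
    | rfind' a h1 =>
      have u := Primrec.unpair
      have g : Nat.RecursiveIn {O} (fun z : ℕ => (Part.some (Nat.pair z.unpair.1.unpair.1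
          (z.unpair.2 + z.unpair.1.unpair.2)) : Part ℕ)) :=
        Nat.Primrec.recursiveIn (f := fun z : ℕ => Nat.pair z.unpair.1.unpair.1
          (z.unpair.2 + z.unpair.1.unpair.2)) (Primrec.nat_iff.1
          (Primrec₂.natPair.comp (Primrec.fst.comp (u.comp (Primrec.fst.comp u)))
            (Primrec.nat_add.comp (Primrec.snd.comp u)
              (Primrec.snd.comp (u.comp (Primrec.fst.comp u))))))
      have ad : Nat.RecursiveIn {O}
          (fun z : ℕ => (Part.some (z.unpair.1 + z.unpair.2) : Part ℕ)) :=
        Nat.Primrec.recursiveIn (f := fun z : ℕ => z.unpair.1 + z.unpair.2)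
          (Primrec.nat_iff.1 (Primrec.nat_add.comp (Primrec.fst.comp u) (Primrec.snd.comp u)))
      refine (ad.comp ((Nat.RecursiveIn.rfind (h1.comp g)).pair .right)).of_eq fun z => ?_
      have hb : ∀ x : ℕ, (Part.some x >>= OCode.evalO O a) = OCode.evalO O a x :=
        fun x => Part.bind_some x _
      simp [OCode.evalO, Seq.seq, Nat.unpaired, Part.bind_some_eq_map, Part.map_map, hb,
        Function.comp_def]

/-- Every oracle code has its own number. -/
theorem encodeOCode_injective : Function.Injective encodeOCode := by
  intro a
  induction a with
  | zero | succ | left | right | oracle =>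
    intro b h; cases b <;> simp only [encodeOCode] at h <;> first | rfl | omega
  | pair a₁ a₂ h1 h2 | comp a₁ a₂ h1 h2 | prec a₁ a₂ h1 h2 =>
    intro b h
    cases b <;> simp only [encodeOCode] at h <;> try omega
    have := Nat.pair_eq_pair.1 (Nat.eq_of_mul_eq_mul_left four_pos (Nat.add_right_cancel h))
    rw [h1 this.1, h2 this.2]
  | rfind' a h1 =>
    intro b h
    cases b <;> simp only [encodeOCode] at h <;> try omega
    rw [h1 (Nat.eq_of_mul_eq_mul_left four_pos (Nat.add_right_cancel h))]

/-- The complexity given by an optimal function takes values in `ℕ`. -/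
theorem OptimalIn.KOf_ne_top {A : Set ℕ} {U : Word →. ℕ} (h : OptimalIn A U) (n : ℕ) :
    KOf U n ≠ ⊤ := by
  obtain ⟨c, hc⟩ := h.2 (fun p => Part.some p.length) (Partrec.recursiveIn
    (Computable.partrec (f := fun p : Word => p.length) Computable.list_length))
  have : KOf (fun p => Part.some p.length) n ≤ n :=
    (iInf₂_le (List.replicate n true) (by simp)).trans (by simp)
  have h2 := (hc n).trans (add_le_add_left this _)
  intro h3
  rw [h3] at h2
  simp at h2

/-- The complexity `K^∞` given by a strongly universal function takes values in `ℕ`. -/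
theorem StronglyUniversal₂In.KInfOf_ne_top {A : Set ℕ} {V : Word → ℕ →. ℕ}
    (h : StronglyUniversal₂In A V) (n : ℕ) : KInfOf V n ≠ ⊤ := by
  obtain ⟨_, comp, _, _, h3, _⟩ := h
  let W : Word → ℕ →. ℕ := fun p t => ((if t < p.length then some 0 else none : Option ℕ) : Part ℕ)
  have hp : Partrec₂ W := Computable.ofOption (Primrec.to_comp (Primrec.ite
    (Primrec.nat_lt.comp Primrec.snd (Primrec.list_length.comp Primrec.fst))
    (Primrec.const _) (Primrec.const _)))
  obtain ⟨e, he⟩ := h3 W (show RecursiveIn _ _ from Nat.Partrec.recursiveIn hp)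
  have hs : {t : ℕ | (V (comp e (List.replicate n true)) t).Dom} = Set.Iio n := by
    ext t
    simp only [he, W, Set.mem_ofPred_eq, Set.mem_Iio, List.length_replicate]
    split_ifs with h <;> simp [h]
  have : KInfOf V n ≤ (comp e (List.replicate n true)).length :=
    iInf₂_le _ ⟨by rw [hs]; exact Set.finite_Iio n,
      by rw [hs]; simp [Set.ncard_eq_toFinset_card']⟩
  exact fun h => absurd (h ▸ this) (by simp)

/-!
A program for `U` that outputs `n` can be turned into one that emits `n` symbols; conversely, with
the jump of the oracle one can wait until an infinite computation has emitted `n` symbols and check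
that it never emits another. This gives both inequalities `≤ct`.

For strictness it suffices to describe, from a word `p` and up to a constant, some `n` whose
complexity on the other side exceeds `2|p|`. For `K^{i,∞}` against `K^i`, let a computation emit one
symbol for each number that lies below, or equals, some number of `K^i`-complexity at most `2|p|`.
These are finitely many, and their number is the least number outside this initial segment, so it
has `K^i`-complexity greater than `2|p|`. For `K^{i+1}` against `K^{i,∞}`, the relation
`2|p| < K^{i,∞}(n)` is recursively enumerable in the jump and, for each `p`, satisfied by some `n`,
so one can search for such an `n`.
-/

open Encodable

/-! ### Relativized computability -/

section Relativized

variable {α β γ : Type*} [Primcodable α] [Primcodable β] [Primcodable γ] {O : Set (ℕ →. ℕ)}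

theorem recursiveIn_bind {f : α →. β} {g : β →. γ} (hf : RecursiveIn O f) (hg : RecursiveIn O g) :
    RecursiveIn O fun x => (f x).bind g :=
  (Nat.RecursiveIn.comp hg hf).of_eq fun n => by
    rcases decode (α := α) n with _ | x
    · simp
    · simpa [Part.bind_map] using (Part.map_bind g (f x) encode).symm

theorem computableIn_comp {f : α → β} {g : β → γ} (hg : ComputableIn O g)
    (hf : ComputableIn O f) : ComputableIn O fun x => g (f x) :=
  RecursiveIn.of_eq (recursiveIn_bind hf hg) fun _ => Part.bind_some _ _

theorem computableIn_pair {f : α → β} {g : α → γ} (hf : ComputableIn O f)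
    (hg : ComputableIn O g) : ComputableIn O fun x => (f x, g x) :=
  (Nat.RecursiveIn.pair hf hg).of_eq fun n => by
    rcases decode (α := α) n with _ | x <;> simp [Seq.seq]

theorem computableIn_nat_rec {h : ℕ → β → β} (b : β) (hh : ComputableIn₂ O h) :
    ComputableIn O fun n : ℕ => (n.rec b h : β) := by
  have hrec := (Nat.RecursiveIn.prec (Nat.Primrec.recursiveIn (.const (encode b)))
    (Nat.RecursiveIn.comp hh .right)).comp
    (Nat.Primrec.recursiveIn (O := O) (Nat.Primrec.zero.pair .id))
  refine hrec.of_eq fun n => ?_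
  simp only [id_eq, Part.coe_some, Nat.unpair_pair, decode_prod_val, decode_nat,
    Option.bind_some, Part.map_some, Part.bind_eq_bind, Part.bind_some]
  induction n with
  | zero => simp
  | succ n ih => simp [ih]

theorem recursiveIn_rfind {p : α → ℕ → Bool} (hp : ComputableIn₂ O p) :
    RecursiveIn O fun x => Nat.rfind fun n => Part.some (p x n) := by
  have hq : ComputableIn₂ O fun x n => cond (p x n) 0 1 :=
    computableIn_comp (Primrec.dom_bool fun b => cond b 0 1).computableIn hp
  have hcond (b : Bool) : decide (cond b 0 1 = 0) = b := by cases b <;> rfl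
  refine (Nat.RecursiveIn.rfind hq).of_eq fun n => ?_
  rcases e : decode (α := α) n with _ | x
  · simpa [e] using Nat.rfind_zero_none (fun _ => Part.none) rfl
  · simp [e, hcond, Part.map_id']

end Relativized

/-! ### Prefixes of an oracle -/

section OraclePrefix

variable {A : Set ℕ}

/-- The first `s` bits of the characteristic sequence of `A`: the finite part of the oracle that a
primitive recursive test at stage `s` is given. -/
noncomputable def oraclePrefix (A : Set ℕ) (s : ℕ) : List ℕ :=
  (List.range s).map (A.indicator 1)

theorem chi_apply (A : Set ℕ) (x : ℕ) : chi A x = Part.some (A.indicator 1 x) := by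
  by_cases h : x ∈ A <;> simp [chi, h]

@[simp]
theorem length_oraclePrefix (A : Set ℕ) (s : ℕ) : (oraclePrefix A s).length = s := by
  simp [oraclePrefix]

theorem getElem?_oraclePrefix_eq_some {s x y : ℕ} :
    (oraclePrefix A s)[x]? = some y ↔ x < s ∧ A.indicator 1 x = y := by
  simp [oraclePrefix, List.getElem?_eq_some_iff]

theorem computableIn_oraclePrefix (A : Set ℕ) : ComputableIn {chi A} (oraclePrefix A) := by
  have hchi : ComputableIn {chi A} (A.indicator (1 : ℕ → ℕ)) :=
    RecursiveIn.of_eq (RecursiveIn.oracle _ rfl) (chi_apply A)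
  have hstep : ComputableIn₂ {chi A} fun n (σ : List ℕ) => σ ++ [A.indicator 1 n] :=
    computableIn_comp Primrec.list_concat.computableIn
      (computableIn_pair .snd (computableIn_comp hchi .fst))
  refine RecursiveIn.of_eq (computableIn_nat_rec [] hstep) fun n => congrArg Part.some ?_
  induction n with
  | zero => rfl
  | succ n ih => simp [ih, oraclePrefix, List.range_succ]

end OraclePrefix

/-! ### Relativized `Σ₁` predicates -/

section BoundedQuantifiers

variable {α β γ : Type*} [Primcodable α] [Primcodable β] [Primcodable γ]
  {R : γ → α × β → Prop} {L : γ → α → List β}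

theorem primrecRel_exists_mem (hR : PrimrecRel R) (hL : Primrec₂ L) :
    PrimrecRel fun z x => ∃ y ∈ L z x, R z (x, y) :=
  have hswap : PrimrecRel fun (y : β) (w : γ × α) => R w.1 (w.2, y) :=
    hR.comp (Primrec.fst.comp Primrec.snd) ((Primrec.snd.comp Primrec.snd).pair Primrec.fst)
  hswap.exists_mem_list.comp hL Primrec.id

theorem primrecRel_forall_mem (hR : PrimrecRel R) (hL : Primrec₂ L) :
    PrimrecRel fun z x => ∀ y ∈ L z x, R z (x, y) :=
  have hswap : PrimrecRel fun (y : β) (w : γ × α) => R w.1 (w.2, y) :=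
    hR.comp (Primrec.fst.comp Primrec.snd) ((Primrec.snd.comp Primrec.snd).pair Primrec.fst)
  hswap.forall_mem_list.comp hL Primrec.id

end BoundedQuantifiers

section SigmaOne

variable {α β : Type*} [Primcodable α] [Primcodable β] {A : Set ℕ} {p q : α → Prop}

/-- `p` is `Σ₁` in `A`, that is recursively enumerable in `A`: some primitive recursive relation
confirms `p x` from a long enough prefix of `A`. Confirmations are required to persist, so that
finitely many of them can be made at a common stage. -/
def SigmaOneIn (A : Set ℕ) (p : α → Prop) : Prop :=
  ∃ Q : List ℕ → α → Prop, PrimrecRel Q ∧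
    (∀ x, Monotone fun s => Q (oraclePrefix A s) x) ∧ ∀ x, p x ↔ ∃ s, Q (oraclePrefix A s) x

theorem SigmaOneIn.of_iff (hp : SigmaOneIn A p) (h : ∀ x, q x ↔ p x) : SigmaOneIn A q := by
  obtain rfl : q = p := funext fun x => propext (h x)
  exact hp

theorem SigmaOneIn.of_primrecPred (hp : PrimrecPred p) : SigmaOneIn A p :=
  ⟨fun _ x => p x, hp.comp Primrec.snd, fun _ _ _ _ h => h, by simp⟩

theorem SigmaOneIn.comp (hp : SigmaOneIn A p) {f : β → α} (hf : Primrec f) :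
    SigmaOneIn A fun x => p (f x) := by
  obtain ⟨Q, hQ, hmono, hiff⟩ := hp
  exact ⟨fun σ x => Q σ (f x), hQ.comp Primrec.fst (hf.comp Primrec.snd), fun x => hmono (f x),
    fun x => hiff (f x)⟩

theorem SigmaOneIn.and (hp : SigmaOneIn A p) (hq : SigmaOneIn A q) :
    SigmaOneIn A fun x => p x ∧ q x := by
  obtain ⟨P, hP, hPmono, hPiff⟩ := hp
  obtain ⟨Q, hQ, hQmono, hQiff⟩ := hq
  refine ⟨fun σ x => P σ x ∧ Q σ x, PrimrecPred.and hP hQ,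
    fun x s t hst h => ⟨hPmono x hst h.1, hQmono x hst h.2⟩, fun x => ?_⟩
  simp only [hPiff, hQiff]
  constructor
  · rintro ⟨⟨s, hs⟩, t, ht⟩
    exact ⟨max s t, hPmono x (le_max_left s t) hs, hQmono x (le_max_right s t) ht⟩
  · rintro ⟨s, hP, hQ⟩
    exact ⟨⟨s, hP⟩, s, hQ⟩

theorem SigmaOneIn.or (hp : SigmaOneIn A p) (hq : SigmaOneIn A q) :
    SigmaOneIn A fun x => p x ∨ q x := by
  obtain ⟨P, hP, hPmono, hPiff⟩ := hp
  obtain ⟨Q, hQ, hQmono, hQiff⟩ := hq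
  exact ⟨fun σ x => P σ x ∨ Q σ x, PrimrecPred.or hP hQ,
    fun x s t hst => Or.imp (hPmono x hst) (hQmono x hst),
    fun x => by simp only [hPiff, hQiff, exists_or]⟩

theorem SigmaOneIn.exists {r : α × β → Prop} (hr : SigmaOneIn A r) :
    SigmaOneIn A fun x => ∃ y, r (x, y) := by
  obtain ⟨R, hR, hmono, hiff⟩ := hr
  let candidates (σ : List ℕ) : List β := (List.range σ.length).filterMap decode
  have hcandidates : Primrec candidates :=
    Primrec.listFilterMap (Primrec.list_range.comp Primrec.list_length)
      (Primrec.decode.comp Primrec.snd)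
  have mem_candidates {s : ℕ} {y : β} (h : encode y < s) : y ∈ candidates (oraclePrefix A s) :=
    List.mem_filterMap.2 ⟨encode y, by simpa using h, encodek y⟩
  have hsubset {s t : ℕ} (hst : s ≤ t) :
      candidates (oraclePrefix A s) ⊆ candidates (oraclePrefix A t) := fun y hy => by
    simp only [candidates, length_oraclePrefix, List.mem_filterMap, List.mem_range] at hy ⊢
    obtain ⟨n, hn, e⟩ := hy
    exact ⟨n, hn.trans_le hst, e⟩
  refine ⟨fun σ x => ∃ y ∈ candidates σ, R σ (x, y),
    primrecRel_exists_mem hR (hcandidates.comp Primrec.fst), ?_, fun x => ⟨?_, ?_⟩⟩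
  · rintro x s t hst ⟨y, hy, h⟩
    exact ⟨y, hsubset hst hy, hmono _ hst h⟩
  · rintro ⟨y, hy⟩
    obtain ⟨s, hs⟩ := (hiff _).1 hy
    exact ⟨max s (encode y + 1), y, mem_candidates (by simp), hmono _ (le_max_left _ _) hs⟩
  · rintro ⟨s, y, -, h⟩
    exact ⟨y, (hiff _).2 ⟨s, h⟩⟩

theorem SigmaOneIn.forall_mem_list {r : α × β → Prop} (hr : SigmaOneIn A r) {L : α → List β}
    (hL : Primrec L) : SigmaOneIn A fun x => ∀ y ∈ L x, r (x, y) := by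
  obtain ⟨R, hR, hmono, hiff⟩ := hr
  refine ⟨fun σ x => ∀ y ∈ L x, R σ (x, y),
    primrecRel_forall_mem hR (hL.comp Primrec.snd),
    fun x s t hst h y hy => hmono _ hst (h y hy), fun x => ⟨fun h => ?_, ?_⟩⟩
  · have hstage : ∀ y ∈ L x, ∀ᶠ s in Filter.atTop, R (oraclePrefix A s) (x, y) := fun y hy => by
      obtain ⟨s, hs⟩ := (hiff _).1 (h y hy)
      exact Filter.eventually_atTop.2 ⟨s, fun t hst => hmono _ hst hs⟩
    exact ((Filter.eventually_all_finite (L x).finite_toSet).2 hstage).exists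
  · rintro ⟨s, hs⟩ y hy
    exact (hiff _).2 ⟨s, hs y hy⟩

theorem SigmaOneIn.indicator_eq (A : Set ℕ) :
    SigmaOneIn A fun z : ℕ × ℕ => A.indicator 1 z.1 = z.2 := by
  refine ⟨fun σ z => σ[z.1]? = some z.2,
    Primrec.eq.comp (Primrec.list_getElem?.comp Primrec.fst (Primrec.fst.comp Primrec.snd))
      (Primrec.option_some.comp (Primrec.snd.comp Primrec.snd)),
    fun z s t hst h => ?_, fun z => ?_⟩
  · simp only [getElem?_oraclePrefix_eq_some] at h ⊢
    exact ⟨h.1.trans_le hst, h.2⟩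
  · simp only [getElem?_oraclePrefix_eq_some, exists_and_right]
    exact (and_iff_right ⟨z.1 + 1, z.1.lt_succ_self⟩).symm

theorem SigmaOneIn.mem (A : Set ℕ) : SigmaOneIn A (· ∈ A) :=
  ((SigmaOneIn.indicator_eq A).comp (Primrec.id.pair (Primrec.const 1))).of_iff fun x => by
    by_cases h : x ∈ A <;> simp [h]

theorem SigmaOneIn.notMem (A : Set ℕ) : SigmaOneIn A (· ∉ A) :=
  ((SigmaOneIn.indicator_eq A).comp (Primrec.id.pair (Primrec.const 0))).of_iff fun x => by
    by_cases h : x ∈ A <;> simp [h]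

theorem mem_natPair_seq_iff {x y : Part ℕ} {n : ℕ} :
    n ∈ Nat.pair <$> x <*> y ↔ n.unpair.1 ∈ x ∧ n.unpair.2 ∈ y := by
  have hpair (a b : ℕ) : Nat.pair a b = n ↔ a = n.unpair.1 ∧ b = n.unpair.2 := by
    rw [← Nat.pair_unpair n, Nat.pair_eq_pair, Nat.pair_unpair]
  simp [Seq.seq, hpair]

theorem mem_nat_rec_bind_iff {γ : Type*} {x : Part γ} {g : ℕ → γ → Part γ} {n : ℕ} {y : γ} :
    y ∈ (n.rec x fun k r => r.bind (g k) : Part γ) ↔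
      ∃ v : ℕ → γ, v 0 ∈ x ∧ (∀ k < n, v (k + 1) ∈ g k (v k)) ∧ v n = y := by
  induction n generalizing y with
  | zero => exact ⟨fun h => ⟨fun _ => y, h, by simp, rfl⟩, fun ⟨_, h, _, hy⟩ => hy ▸ h⟩
  | succ n ih =>
    simp only [Part.mem_bind_iff, ih]
    constructor
    · rintro ⟨_, ⟨v, h0, hstep, rfl⟩, hy⟩
      have hv {k : ℕ} (hk : k ≤ n) : Function.update v (n + 1) y k = v k :=
        Function.update_of_ne (by lia) _ _
      refine ⟨Function.update v (n + 1) y, by rwa [hv n.zero_le], fun k hk => ?_, by simp⟩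
      rcases Nat.lt_succ_iff_lt_or_eq.1 hk with hk | rfl
      · rw [hv hk, hv hk.le]
        exact hstep k hk
      · rwa [Function.update_self, hv le_rfl]
    · rintro ⟨v, h0, hstep, rfl⟩
      exact ⟨v n, ⟨v, h0, fun k hk => hstep k (by lia), rfl⟩, hstep n n.lt_succ_self⟩

theorem exists_list_getD_eq (v : ℕ → ℕ) (n : ℕ) : ∃ L : List ℕ, ∀ k ≤ n, L.getD k 0 = v k :=
  ⟨(List.range (n + 1)).map v, fun k hk => by simp [List.getD, Nat.lt_succ_of_le hk]⟩

theorem mem_nat_rec_bind_iff_list {x : Part ℕ} {g : ℕ → ℕ → Part ℕ} {n y : ℕ} :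
    y ∈ (n.rec x fun k r => r.bind (g k) : Part ℕ) ↔ ∃ L : List ℕ,
      L.getD 0 0 ∈ x ∧ (∀ k ∈ List.range n, L.getD (k + 1) 0 ∈ g k (L.getD k 0)) ∧
        L.getD n 0 = y := by
  rw [mem_nat_rec_bind_iff]
  constructor
  · rintro ⟨v, h0, hstep, rfl⟩
    obtain ⟨L, hL⟩ := exists_list_getD_eq v n
    refine ⟨L, by rwa [hL 0 n.zero_le], fun k hk => ?_, hL n le_rfl⟩
    have hk := List.mem_range.1 hk
    rw [hL k hk.le, hL (k + 1) hk]
    exact hstep k hk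
  · rintro ⟨L, h0, hstep, rfl⟩
    exact ⟨fun k => L.getD k 0, h0, fun k hk => hstep k (List.mem_range.2 hk), rfl⟩

theorem SigmaOneIn.graph_prec {f g : ℕ →. ℕ} (hf : SigmaOneIn A fun z : ℕ × ℕ => z.2 ∈ f z.1)
    (hg : SigmaOneIn A fun z : ℕ × ℕ => z.2 ∈ g z.1) :
    SigmaOneIn A fun z : ℕ × ℕ => z.2 ∈ (z.1.unpair.2.rec (f z.1.unpair.1)
      fun k r => r.bind fun i => g (Nat.pair z.1.unpair.1 (Nat.pair k i)) : Part ℕ) := by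
  have unpair₁ : Primrec fun w : (ℕ × ℕ) × List ℕ => w.1.1.unpair.1 :=
    Primrec.fst.comp (Primrec.unpair.comp (Primrec.fst.comp Primrec.fst))
  have unpair₂ : Primrec fun w : (ℕ × ℕ) × List ℕ => w.1.1.unpair.2 :=
    Primrec.snd.comp (Primrec.unpair.comp (Primrec.fst.comp Primrec.fst))
  have entry {i : ((ℕ × ℕ) × List ℕ) × ℕ → ℕ} (hi : Primrec i) :
      Primrec fun w : ((ℕ × ℕ) × List ℕ) × ℕ => w.1.2.getD (i w) 0 :=
    (Primrec.list_getD 0).comp (Primrec.snd.comp Primrec.fst) hi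
  have hinit : SigmaOneIn A fun w : (ℕ × ℕ) × List ℕ => w.2.getD 0 0 ∈ f w.1.1.unpair.1 :=
    hf.comp (unpair₁.pair ((Primrec.list_getD 0).comp Primrec.snd (Primrec.const 0)))
  have hstep : SigmaOneIn A fun w : (ℕ × ℕ) × List ℕ => ∀ k ∈ List.range w.1.1.unpair.2,
      w.2.getD (k + 1) 0 ∈ g (Nat.pair w.1.1.unpair.1 (Nat.pair k (w.2.getD k 0))) :=
    (hg.comp (β := ((ℕ × ℕ) × List ℕ) × ℕ) ((Primrec₂.natPair.comp (unpair₁.comp Primrec.fst)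
      (Primrec₂.natPair.comp Primrec.snd (entry Primrec.snd))).pair
        (entry (Primrec.succ.comp Primrec.snd)))).forall_mem_list
      (Primrec.list_range.comp unpair₂)
  have hout : SigmaOneIn A fun w : (ℕ × ℕ) × List ℕ => w.2.getD w.1.1.unpair.2 0 = w.1.2 :=
    of_primrecPred (Primrec.eq.comp ((Primrec.list_getD 0).comp Primrec.snd unpair₂)
      (Primrec.snd.comp Primrec.fst))
  exact (hinit.and (hstep.and hout)).exists.of_iff fun z => mem_nat_rec_bind_iff_list

theorem mem_rfind_eq_zero_iff {f : ℕ → Part ℕ} {y : ℕ} :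
    (y ∈ Nat.rfind fun n => (fun m => decide (m = 0)) <$> f n) ↔
      0 ∈ f y ∧ ∀ j ∈ List.range y, ∃ v, v + 1 ∈ f j := by
  have hpos (j : ℕ) : false ∈ (fun m => decide (m = 0)) <$> f j ↔ ∃ v, v + 1 ∈ f j := by
    simp only [Part.map_eq_map, Part.mem_map_iff, decide_eq_false_iff_not]
    exact ⟨fun ⟨m, hm, h0⟩ => ⟨m - 1, by rwa [Nat.sub_one_add_one h0]⟩,
      fun ⟨v, hv⟩ => ⟨v + 1, hv, v.succ_ne_zero⟩⟩
  exact Nat.mem_rfind.trans (and_congr (by simp) (by simp only [hpos, List.mem_range]))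

theorem SigmaOneIn.graph_rfind {f : ℕ →. ℕ} (hf : SigmaOneIn A fun z : ℕ × ℕ => z.2 ∈ f z.1) :
    SigmaOneIn A fun z : ℕ × ℕ =>
      z.2 ∈ Nat.rfind fun n => (fun m => decide (m = 0)) <$> f (Nat.pair z.1 n) := by
  have hzero : SigmaOneIn A fun z : ℕ × ℕ => 0 ∈ f (Nat.pair z.1 z.2) :=
    hf.comp (Primrec.pair Primrec₂.natPair (Primrec.const 0))
  have hpos : SigmaOneIn A fun z : (ℕ × ℕ) × ℕ => ∃ v, v + 1 ∈ f (Nat.pair z.1.1 z.2) :=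
    (hf.comp (β := ((ℕ × ℕ) × ℕ) × ℕ) ((Primrec₂.natPair.comp
      (Primrec.fst.comp (Primrec.fst.comp Primrec.fst)) (Primrec.snd.comp Primrec.fst)).pair
        (Primrec.succ.comp Primrec.snd))).exists
  exact (hzero.and (hpos.forall_mem_list (Primrec.list_range.comp Primrec.snd))).of_iff
    fun z => mem_rfind_eq_zero_iff

theorem SigmaOneIn.graph_nat {f : ℕ →. ℕ} (hf : Nat.RecursiveIn {chi A} f) :
    SigmaOneIn A fun z : ℕ × ℕ => z.2 ∈ f z.1 := by
  have graph_total {f : ℕ → ℕ} (hf : Primrec f) : SigmaOneIn A fun z : ℕ × ℕ => z.2 = f z.1 :=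
    of_primrecPred (Primrec.eq.comp Primrec.snd (hf.comp Primrec.fst))
  induction hf with
  | zero => exact (graph_total (Primrec.const 0)).of_iff fun _ => Part.mem_some_iff
  | succ => exact (graph_total Primrec.succ).of_iff fun _ => Part.mem_some_iff
  | left =>
    exact (graph_total (Primrec.fst.comp Primrec.unpair)).of_iff fun _ => Part.mem_some_iff
  | right =>
    exact (graph_total (Primrec.snd.comp Primrec.unpair)).of_iff fun _ => Part.mem_some_iff
  | oracle g hg =>
    exact (indicator_eq A).of_iff fun z => by
      rw [Set.mem_singleton_iff.1 hg, chi_apply, Part.mem_some_iff, eq_comm]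
  | @pair f g _ _ hf hg =>
    have unpair : Primrec fun z : ℕ × ℕ => z.2.unpair := Primrec.unpair.comp Primrec.snd
    exact ((hf.comp (Primrec.fst.pair (Primrec.fst.comp unpair))).and
      (hg.comp (Primrec.fst.pair (Primrec.snd.comp unpair)))).of_iff fun z => mem_natPair_seq_iff
  | @comp f g _ _ hf hg =>
    exact ((hg.comp (β := (ℕ × ℕ) × ℕ) ((Primrec.fst.comp Primrec.fst).pair Primrec.snd)).and
      (hf.comp (Primrec.snd.pair (Primrec.snd.comp Primrec.fst)))).exists.of_iff
      fun z => Part.mem_bind_iff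
  | prec _ _ hf hg => exact hf.graph_prec hg
  | rfind _ hf => exact hf.graph_rfind

theorem SigmaOneIn.graph {f : α →. β} (hf : RecursiveIn {chi A} f) :
    SigmaOneIn A fun z : α × β => z.2 ∈ f z.1 :=
  ((graph_nat hf).comp ((Primrec.encode.comp Primrec.fst).pair
    (Primrec.encode.comp Primrec.snd))).of_iff fun z => by simp

theorem exists_recursiveIn_search (A : Set ℕ) {Q : List ℕ → α → Prop} (hQ : PrimrecRel Q) :
    ∃ f : α →. ℕ, RecursiveIn {chi A} f ∧ (∀ x, ∀ s ∈ f x, Q (oraclePrefix A s) x) ∧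
      ∀ x s, Q (oraclePrefix A s) x → (f x).Dom := by
  classical
  have htest : ComputableIn₂ {chi A} fun x s => decide (Q (oraclePrefix A s) x) :=
    computableIn_comp hQ.decide.computableIn
      (computableIn_pair (computableIn_comp (computableIn_oraclePrefix A) .snd) .fst)
  refine ⟨_, recursiveIn_rfind htest, fun x s hs => by simpa using Nat.rfind_spec hs,
    fun x s hs => Nat.rfind_dom.2 ⟨s, by simpa using hs, fun _ => trivial⟩⟩

theorem SigmaOneIn.exists_uniformization {r : α × β → Prop} (hr : SigmaOneIn A r) :
    ∃ f : α →. β, RecursiveIn {chi A} f ∧ (∀ x, ∀ y ∈ f x, r (x, y)) ∧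
      ∀ x y, r (x, y) → (f x).Dom := by
  obtain ⟨R, hR, hmono, hiff⟩ := hr
  -- Stage `s` tests the value coded by `s.unpair.1`, so every value is tested at late stages.
  let guess (s : ℕ) : Option β := decode s.unpair.1
  have hguess : Primrec guess := Primrec.decode.comp (Primrec.fst.comp Primrec.unpair)
  have hguesses : Primrec₂ fun (σ : List ℕ) (_ : α) => (guess σ.length).toList :=
    Primrec.optionToList.comp (hguess.comp (Primrec.list_length.comp Primrec.fst))
  obtain ⟨search, hsearch, hsound, hcomplete⟩ :=
    exists_recursiveIn_search A (primrecRel_exists_mem hR hguesses)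
  refine ⟨fun x => (search x).bind fun s => guess s,
    recursiveIn_bind hsearch hguess.to_comp.ofOption.recursiveIn, fun x y hy => ?_,
    fun x y hy => ?_⟩
  · obtain ⟨s, hs, hys⟩ := Part.mem_bind_iff.1 hy
    obtain ⟨y', hy', h⟩ := hsound x s hs
    rw [length_oraclePrefix, Option.mem_toList] at hy'
    obtain rfl : y' = y := Option.mem_unique hy' (Part.mem_ofOption.1 hys)
    exact (hiff _).2 ⟨s, h⟩
  · obtain ⟨s₀, hs₀⟩ := (hiff _).1 hy
    have hdom : (search x).Dom := hcomplete x (Nat.pair (encode y) s₀)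
      ⟨y, by simp [guess], hmono _ (Nat.right_le_pair _ _) hs₀⟩
    obtain ⟨y', hy', -⟩ := hsound x _ (Part.get_mem hdom)
    rw [length_oraclePrefix, Option.mem_toList] at hy'
    exact Part.dom_iff_mem.2 ⟨y', Part.mem_bind (Part.get_mem hdom) (Part.mem_ofOption.2 hy')⟩

theorem SigmaOneIn.exists_recursiveIn_dom_iff (hp : SigmaOneIn A p) :
    ∃ f : α →. ℕ, RecursiveIn {chi A} f ∧ ∀ x, (f x).Dom ↔ p x := by
  obtain ⟨f, hf, hsound, hcomplete⟩ :=
    (hp.comp (Primrec.fst (α := α) (β := ℕ))).exists_uniformization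
  exact ⟨f, hf, fun x => ⟨fun h => hsound x _ (Part.get_mem h), hcomplete x 0⟩⟩

/-! ### The jump -/

/-- The code of the constant function with value `n`, used to hardwire an input into a code. -/
def OCode.const : ℕ → OCode
  | 0 => .zero
  | n + 1 => .comp .succ (OCode.const n)

theorem OCode.evalO_const (O : ℕ →. ℕ) (n x : ℕ) : (OCode.const n).evalO O x = Part.some n := by
  induction n with
  | zero => rfl
  | succ n ih =>
    simp only [OCode.const, OCode.evalO, ih]
    exact Part.bind_some _ _

theorem primrec_encodeOCode_comp {f g : α → OCode} (hf : Primrec fun x => encodeOCode (f x))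
    (hg : Primrec fun x => encodeOCode (g x)) :
    Primrec fun x => encodeOCode (.comp (f x) (g x)) :=
  Primrec.nat_add.comp (Primrec.nat_mul.comp (Primrec.const 4) (Primrec₂.natPair.comp hf hg))
    (Primrec.const 6)

theorem primrec_encodeOCode_const : Primrec fun n => encodeOCode (OCode.const n) := by
  have hstep : Primrec₂ fun _ c : ℕ => 4 * Nat.pair (encodeOCode .succ) c + 6 :=
    Primrec.nat_add.comp (Primrec.nat_mul.comp (Primrec.const 4)
      (Primrec₂.natPair.comp (Primrec.const _) Primrec.snd)) (Primrec.const 6)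
  refine (Primrec.nat_rec₁ (encodeOCode .zero) hstep).of_eq fun n => ?_
  induction n with
  | zero => rfl
  | succ n ih => exact congrArg (fun c => 4 * Nat.pair 1 c + 6) ih

theorem SigmaOneIn.exists_mem_jump_iff (hp : SigmaOneIn A p) :
    ∃ g : α → ℕ, Primrec g ∧ ∀ x, p x ↔ g x ∈ jump A := by
  obtain ⟨f, hf, hdom⟩ := hp.exists_recursiveIn_dom_iff
  obtain ⟨c, hc⟩ := OCode.exists_code.1 hf
  refine ⟨fun x => encodeOCode (.comp c (OCode.const (encode x))),
    primrec_encodeOCode_comp (Primrec.const _) (primrec_encodeOCode_const.comp Primrec.encode),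
    fun x => ?_⟩
  have heval (e : ℕ) : (OCode.comp c (OCode.const (encode x))).evalO (chi A) e =
      (f x).map encode := by
    simp only [OCode.evalO, OCode.evalO_const, hc]
    exact (Part.bind_some _ _).trans (by simp)
  rw [← hdom x]
  constructor
  · intro h
    exact ⟨_, rfl, by rwa [heval]⟩
  · rintro ⟨c', hc', h⟩
    rwa [encodeOCode_injective hc', heval] at h

theorem SigmaOneIn.in_jump (hp : SigmaOneIn A p) : SigmaOneIn (jump A) p := by
  obtain ⟨g, hg, hiff⟩ := hp.exists_mem_jump_iff
  exact ((SigmaOneIn.mem _).comp hg).of_iff hiff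

theorem SigmaOneIn.not_in_jump (hp : SigmaOneIn A p) : SigmaOneIn (jump A) fun x => ¬p x := by
  obtain ⟨g, hg, hiff⟩ := hp.exists_mem_jump_iff
  exact ((SigmaOneIn.notMem _).comp hg).of_iff fun x => not_congr (hiff x)

/-! ### Counting the elements of a `Σ₁` set -/

theorem primrecPred_nodup : PrimrecPred fun L : List β => L.Nodup := by
  classical
  have hcount : PrimrecRel fun (y : β) (L : List β) => (L.filter fun z => z = y).length = 1 :=
    Primrec.eq.comp
      (Primrec.list_length.comp ((Primrec.eq (α := β)).listFilter.comp Primrec.snd Primrec.fst))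
      (Primrec.const 1)
  refine (hcount.forall_mem_list.comp Primrec.id Primrec.id).of_eq fun L => ?_
  simp only [List.nodup_iff_count_eq_one, List.count_eq_length_filter, id, beq_eq_decide]

theorem natCast_le_encard_iff {γ : Type*} {s : Set γ} {k : ℕ} :
    (k : ℕ∞) ≤ s.encard ↔ ∃ L : List γ, (L.Nodup ∧ L.length = k) ∧ ∀ y ∈ L, y ∈ s := by
  classical
  constructor
  · intro h
    obtain ⟨t, hts, ht⟩ := Set.exists_subset_encard_eq h
    have hfin : t.Finite := Set.finite_of_encard_eq_coe ht
    refine ⟨hfin.toFinset.toList, ⟨Finset.nodup_toList _, ?_⟩, fun y hy => hts (by simpa using hy)⟩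
    rw [hfin.encard_eq_coe_toFinset_card] at ht
    simpa using ht
  · rintro ⟨L, ⟨hnodup, rfl⟩, hL⟩
    calc (L.length : ℕ∞) = (L.toFinset : Set γ).encard := by
          rw [Set.encard_coe_eq_coe_finsetCard, List.toFinset_card_of_nodup hnodup]
      _ ≤ s.encard := Set.encard_le_encard fun y hy => hL y (by simpa using hy)

section Encard

variable {E : α → Set β}

theorem SigmaOneIn.le_encard (hE : SigmaOneIn A fun z : α × β => z.2 ∈ E z.1) :
    SigmaOneIn A fun z : α × ℕ => (z.2 : ℕ∞) ≤ (E z.1).encard := by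
  have hlist : SigmaOneIn A fun z : (α × ℕ) × List β => z.2.Nodup ∧ z.2.length = z.1.2 :=
    of_primrecPred ((primrecPred_nodup.comp Primrec.snd).and
      (Primrec.eq.comp (Primrec.list_length.comp Primrec.snd) (Primrec.snd.comp Primrec.fst)))
  have hsubset : SigmaOneIn A fun z : (α × ℕ) × List β => ∀ y ∈ z.2, y ∈ E z.1.1 :=
    (hE.comp (β := ((α × ℕ) × List β) × β)
      ((Primrec.fst.comp (Primrec.fst.comp Primrec.fst)).pair Primrec.snd)).forall_mem_list
      Primrec.snd
  exact (hlist.and hsubset).exists.of_iff fun z => natCast_le_encard_iff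

theorem SigmaOneIn.encard_eq_in_jump (hE : SigmaOneIn A fun z : α × β => z.2 ∈ E z.1) :
    SigmaOneIn (jump A) fun z : α × ℕ => (E z.1).encard = z.2 := by
  have hsucc : Primrec fun z : α × ℕ => (z.1, z.2 + 1) :=
    Primrec.fst.pair (Primrec.succ.comp Primrec.snd)
  refine (hE.le_encard.in_jump.and (hE.le_encard.comp hsucc).not_in_jump).of_iff fun z => ?_
  rw [Nat.cast_add_one, ENat.add_one_le_iff (ENat.natCast_ne_top _), not_lt,
    le_antisymm_iff, and_comm]

theorem SigmaOneIn.encard_ne_in_jump (hE : SigmaOneIn A fun z : α × β => z.2 ∈ E z.1) :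
    SigmaOneIn (jump A) fun z : α × ℕ => (E z.1).encard ≠ z.2 := by
  have hsucc : Primrec fun z : α × ℕ => (z.1, z.2 + 1) :=
    Primrec.fst.pair (Primrec.succ.comp Primrec.snd)
  refine (hE.le_encard.not_in_jump.or (hE.le_encard.comp hsucc).in_jump).of_iff fun z => ?_
  rw [Nat.cast_add_one, ENat.add_one_le_iff (ENat.natCast_ne_top _), not_le, ne_iff_lt_or_gt]

end Encard

end SigmaOne

/-! ### Complexities -/

section Complexity

variable {A : Set ℕ} {D : Word → ℕ → Prop} {f g : ℕ → ℕ∞} {n : ℕ}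

/-- The complexity `min {|p| : D p n}` given by a description relation `D`, where `D p n` says
that `p` describes `n`. Both `KOf` and `KInfOf` are of this form. -/
noncomputable def complexity (D : Word → ℕ → Prop) (n : ℕ) : ℕ∞ :=
  ⨅ (p : Word) (_ : D p n), (p.length : ℕ∞)

theorem KOf_eq_complexity (U : Word →. ℕ) : KOf U = complexity fun p n => n ∈ U p :=
  rfl

/-- The steps at which program `p` emits a symbol in its possibly infinite computation. -/
def emissions (V : Word → ℕ →. ℕ) (p : Word) : Set ℕ :=
  {t | (V p t).Dom}

theorem KInfOf_eq_complexity (V : Word → ℕ →. ℕ) :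
    KInfOf V = complexity fun p n => (emissions V p).encard = n := by
  funext n
  refine iInf_congr fun p => iInf_congr_Prop ⟨?_, fun h => ?_⟩ fun _ => rfl
  · rintro ⟨hfin, rfl⟩
    exact hfin.cast_ncard_eq.symm
  · have hfin := Set.finite_of_encard_eq_coe h
    exact ⟨hfin, by exact_mod_cast hfin.cast_ncard_eq.trans h⟩

theorem complexity_le {p : Word} (h : D p n) : complexity D n ≤ p.length :=
  iInf₂_le p h

theorem complexity_le_iff {k : ℕ} : complexity D n ≤ k ↔ ∃ p, p.length ≤ k ∧ D p n := by
  constructor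
  · contrapose!
    intro h
    refine (ENat.add_one_le_iff (ENat.natCast_ne_top k)).1 (le_iInf₂ fun p hp => ?_)
    have hlt : k < p.length := lt_of_not_ge fun hle => h p hle hp
    exact_mod_cast hlt
  · rintro ⟨p, hpk, hp⟩
    exact (complexity_le hp).trans (by exact_mod_cast hpk)

theorem lt_complexity_iff {k : ℕ} : k < complexity D n ↔ ∀ p, p.length ≤ k → ¬D p n := by
  rw [← not_le, complexity_le_iff]
  push Not
  rfl

theorem leCt_complexity (c : ℕ) (h : ∀ p n, D p n → f n ≤ p.length + c) :
    LeCt f (complexity D) :=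
  ⟨c, fun n => tsub_le_iff_right.1 (le_iInf₂ fun p hp => tsub_le_iff_right.2 (h p n hp))⟩

theorem finite_complexity_le (hD : ∀ p, {n | D p n}.Subsingleton) (k : ℕ) :
    {n | complexity D n ≤ k}.Finite := by
  have hunion : {n | complexity D n ≤ k} = ⋃ p ∈ {p : Word | p.length ≤ k}, {n | D p n} := by
    ext n
    simp [complexity_le_iff]
  rw [hunion]
  exact (List.finite_length_le Bool k).biUnion fun p _ => (hD p).finite

theorem finite_KOf_le (U : Word →. ℕ) (k : ℕ) : {n | KOf U n ≤ k}.Finite := by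
  rw [KOf_eq_complexity]
  exact finite_complexity_le (D := fun p n => n ∈ U p) (fun _ _ hm _ hn => Part.mem_unique hm hn) k

theorem finite_KInfOf_le (V : Word → ℕ →. ℕ) (k : ℕ) : {n | KInfOf V n ≤ k}.Finite := by
  rw [KInfOf_eq_complexity]
  exact finite_complexity_le (fun _ _ hm _ hn => Nat.cast_injective (hm.symm.trans hn)) k

theorem gtCt_of_forall_two_mul_length_lt (c : ℕ) (hle : LeCt f g)
    (h : ∀ p : Word, ∃ n, f n ≤ p.length + c ∧ (2 * p.length : ℕ) < g n) : GtCt g f := by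
  refine ⟨hle, fun d => ?_⟩
  obtain ⟨n, hf, hg⟩ := h (List.replicate (c + d) true)
  rw [List.length_replicate] at hf hg
  refine ⟨n, lt_of_le_of_lt ?_ hg⟩
  calc f n + d ≤ (c + d : ℕ) + c + d := add_le_add_left hf d
    _ = (2 * (c + d) : ℕ) := by push_cast; ring

/-- The binary words of length at most `k`, listed so that bounded quantification over words is
visibly primitive recursive. -/
def wordsUpTo (k : ℕ) : List Word :=
  k.rec [[]] fun _ L => [] :: (L.map (List.cons true) ++ L.map (List.cons false))

theorem mem_wordsUpTo {k : ℕ} {p : Word} : p ∈ wordsUpTo k ↔ p.length ≤ k := by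
  induction k generalizing p with
  | zero => simp [wordsUpTo]
  | succ k ih =>
    rcases p with _ | ⟨b, p⟩
    · simp [wordsUpTo]
    · cases b <;> simpa [wordsUpTo] using ih

theorem primrec_wordsUpTo : Primrec wordsUpTo := by
  have hcons (b : Bool) : Primrec₂ fun (_ : ℕ × List Word) (p : Word) => b :: p :=
    Primrec.list_cons.comp (Primrec.const b) Primrec.snd
  exact Primrec.nat_rec₁ _ (Primrec.list_cons.comp (Primrec.const []) (Primrec.list_append.comp
    (Primrec.list_map Primrec.snd (hcons true)) (Primrec.list_map Primrec.snd (hcons false))))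

theorem SigmaOneIn.lt_complexity (hD : SigmaOneIn A fun z : Word × ℕ => ¬D z.1 z.2) :
    SigmaOneIn A fun z : ℕ × ℕ => z.1 < complexity D z.2 := by
  have hcomp : SigmaOneIn A fun z : (ℕ × ℕ) × Word => ¬D z.2 z.1.2 :=
    hD.comp (β := (ℕ × ℕ) × Word) (Primrec.snd.pair (Primrec.snd.comp Primrec.fst))
  refine (hcomp.forall_mem_list (primrec_wordsUpTo.comp Primrec.fst)).of_iff fun z => ?_
  simp only [lt_complexity_iff, mem_wordsUpTo]

theorem SigmaOneIn.complexity_le (hD : SigmaOneIn A fun z : Word × ℕ => D z.1 z.2) :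
    SigmaOneIn A fun z : ℕ × ℕ => complexity D z.2 ≤ z.1 := by
  have hlength : SigmaOneIn A fun z : (ℕ × ℕ) × Word => z.2.length ≤ z.1.1 :=
    of_primrecPred (Primrec.nat_le.comp (Primrec.list_length.comp Primrec.snd)
      (Primrec.fst.comp Primrec.fst))
  have hcomp : SigmaOneIn A fun z : (ℕ × ℕ) × Word => D z.2 z.1.2 :=
    hD.comp (β := (ℕ × ℕ) × Word) (Primrec.snd.pair (Primrec.snd.comp Primrec.fst))
  exact (hlength.and hcomp).exists.of_iff fun z => complexity_le_iff

end Complexity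

/-! ### The hierarchy -/

section Hierarchy

variable {A : Set ℕ} {U : Word →. ℕ} {V : Word → ℕ →. ℕ}

theorem OptimalIn.exists_KOf_le (hU : OptimalIn A U) {D : Word → ℕ → Prop}
    (hD : SigmaOneIn A fun z : Word × ℕ => D z.1 z.2) :
    ∃ c : ℕ, ∀ p n, D p n → ∃ m, D p m ∧ KOf U m ≤ p.length + c := by
  obtain ⟨W, hW, hWD, hdom⟩ := hD.exists_uniformization
  obtain ⟨c, hc⟩ := hU.2 W hW
  refine ⟨c, fun p n hpn => ?_⟩
  obtain ⟨m, hm⟩ := Part.dom_iff_mem.1 (hdom p n hpn)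
  exact ⟨m, hWD p m hm, (hc m).trans (add_le_add_left (complexity_le hm) _)⟩

theorem StronglyUniversal₂In.exists_KInfOf_le (hV : StronglyUniversal₂In A V) {E : Word → Set ℕ}
    (hE : SigmaOneIn A fun z : Word × ℕ => z.2 ∈ E z.1) :
    ∃ c : ℕ, ∀ p (n : ℕ), (E p).encard = n → KInfOf V n ≤ p.length + c := by
  obtain ⟨W, hW, hdom⟩ := hE.exists_recursiveIn_dom_iff
  obtain ⟨-, comp, -, -, hcomp, hlength⟩ := hV
  obtain ⟨e, he⟩ := hcomp (fun p t => W (p, t)) hW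
  obtain ⟨c, hc⟩ := hlength e
  refine ⟨c, fun p n hn => ?_⟩
  have hemissions : emissions V (comp e p) = E p := by
    ext t
    rw [emissions, Set.mem_ofPred_eq, he, hdom]
  rw [KInfOf_eq_complexity]
  calc complexity (fun p n => (emissions V p).encard = n) n ≤ (comp e p).length :=
        complexity_le ((congrArg Set.encard hemissions).trans hn)
    _ ≤ p.length + c := by exact_mod_cast hc p

theorem sigmaOneIn_emissions (hV : RecursiveIn₂ {chi A} V) :
    SigmaOneIn A fun z : Word × ℕ => z.2 ∈ emissions V z.1 :=
  (SigmaOneIn.graph hV).exists.of_iff fun _ => Part.dom_iff_mem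

theorem leCt_KInfOf_KOf (hU : RecursiveIn {chi A} U) (hV : StronglyUniversal₂In A V) :
    LeCt (KInfOf V) (KOf U) := by
  let E (p : Word) : Set ℕ := {t | ∃ n ∈ U p, t < n}
  have hE : SigmaOneIn A fun z : Word × ℕ => z.2 ∈ E z.1 := by
    have hgraph : SigmaOneIn A fun z : (Word × ℕ) × ℕ => z.2 ∈ U z.1.1 :=
      (SigmaOneIn.graph hU).comp (β := (Word × ℕ) × ℕ)
        ((Primrec.fst.comp Primrec.fst).pair Primrec.snd)
    have hlt : SigmaOneIn A fun z : (Word × ℕ) × ℕ => z.1.2 < z.2 :=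
      .of_primrecPred (Primrec.nat_lt.comp (Primrec.snd.comp Primrec.fst) Primrec.snd)
    exact (hgraph.and hlt).exists
  obtain ⟨c, hc⟩ := hV.exists_KInfOf_le hE
  rw [KOf_eq_complexity]
  refine leCt_complexity c fun p n hn => hc p n ?_
  have hsegment : E p = {t | t < n} := by
    simp only [E, Part.eq_some_iff.2 hn, Part.mem_some_iff, exists_eq_left]
  rw [hsegment]
  exact Set.Nat.encard_range n

theorem ncard_notMem_of_isLowerSet {s : Set ℕ} (hs : IsLowerSet s) (hfin : s.Finite) :
    s.ncard ∉ s := by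
  intro hmem
  have hsubset : Set.Iic s.ncard ⊆ s := fun m hm => hs hm hmem
  have hcard := Set.ncard_le_ncard hsubset hfin
  rw [Set.ncard_eq_toFinset_card', Set.toFinset_Iic, Nat.card_Iic] at hcard
  exact absurd hcard (Nat.not_succ_le_self _)

theorem SigmaOneIn.mem_lowerClosure {α : Type*} [Primcodable α] {E : α → Set ℕ}
    (hE : SigmaOneIn A fun z : α × ℕ => z.2 ∈ E z.1) :
    SigmaOneIn A fun z : α × ℕ => z.2 ∈ (lowerClosure (E z.1) : Set ℕ) := by
  have hmem : SigmaOneIn A fun z : (α × ℕ) × ℕ => z.2 ∈ E z.1.1 :=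
    hE.comp (β := (α × ℕ) × ℕ) ((Primrec.fst.comp Primrec.fst).pair Primrec.snd)
  have hle : SigmaOneIn A fun z : (α × ℕ) × ℕ => z.1.2 ≤ z.2 :=
    of_primrecPred (Primrec.nat_le.comp (Primrec.snd.comp Primrec.fst) Primrec.snd)
  exact (hmem.and hle).exists

theorem gtCt_KOf_KInfOf (hU : RecursiveIn {chi A} U) (hV : StronglyUniversal₂In A V) :
    GtCt (KOf U) (KInfOf V) := by
  let simple (p : Word) : Set ℕ := {n | KOf U n ≤ (2 * p.length : ℕ)}
  have hKOf : SigmaOneIn A fun z : ℕ × ℕ => KOf U z.2 ≤ z.1 := by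
    rw [KOf_eq_complexity]
    exact SigmaOneIn.complexity_le (D := fun p n => n ∈ U p) (SigmaOneIn.graph hU)
  have hsimple : SigmaOneIn A fun z : Word × ℕ => z.2 ∈ simple z.1 :=
    hKOf.comp (f := fun z : Word × ℕ => (2 * z.1.length, z.2))
      ((Primrec.nat_mul.comp (Primrec.const 2) (Primrec.list_length.comp Primrec.fst)).pair
        Primrec.snd)
  obtain ⟨c, hc⟩ := hV.exists_KInfOf_le (E := fun p => lowerClosure (simple p))
    hsimple.mem_lowerClosure
  refine gtCt_of_forall_two_mul_length_lt c (leCt_KInfOf_KOf hU hV) fun p => ?_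
  have hfin : (lowerClosure (simple p) : Set ℕ).Finite := (finite_KOf_le U _).lowerClosure
  refine ⟨_, hc p _ hfin.cast_ncard_eq.symm, lt_of_not_ge fun hle => ?_⟩
  exact ncard_notMem_of_isLowerSet (lowerClosure _).lower hfin (subset_lowerClosure hle)

theorem leCt_KOf_jump_KInfOf (hV : RecursiveIn₂ {chi A} V) (hU : OptimalIn (jump A) U) :
    LeCt (KOf U) (KInfOf V) := by
  obtain ⟨c, hc⟩ := hU.exists_KOf_le (D := fun p n => (emissions V p).encard = n)
    (sigmaOneIn_emissions hV).encard_eq_in_jump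
  rw [KInfOf_eq_complexity]
  refine leCt_complexity c fun p n hn => ?_
  obtain ⟨m, hm, hle⟩ := hc p n hn
  rwa [← Nat.cast_injective (hm.symm.trans hn)]

theorem gtCt_KInfOf_KOf_jump (hV : RecursiveIn₂ {chi A} V) (hU : OptimalIn (jump A) U) :
    GtCt (KInfOf V) (KOf U) := by
  have hD : SigmaOneIn (jump A) fun z : Word × ℕ => (2 * z.1.length : ℕ) < KInfOf V z.2 := by
    rw [KInfOf_eq_complexity]
    exact (sigmaOneIn_emissions hV).encard_ne_in_jump.lt_complexity.comp (β := Word × ℕ)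
      ((Primrec.nat_mul.comp (Primrec.const 2) (Primrec.list_length.comp Primrec.fst)).pair
        Primrec.snd)
  obtain ⟨c, hc⟩ := hU.exists_KOf_le (D := fun p n => (2 * p.length : ℕ) < KInfOf V n) hD
  refine gtCt_of_forall_two_mul_length_lt c (leCt_KOf_jump_KInfOf hV hU) fun p => ?_
  obtain ⟨n, hn⟩ := (finite_KInfOf_le V (2 * p.length)).exists_notMem
  obtain ⟨m, hm, hle⟩ := hc p n (lt_of_not_ge hn)
  exact ⟨m, hle, hm⟩

theorem stmt2_general (hU : RecursiveIn {chi A} U) (hV : StronglyUniversal₂In A V)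
    {U' : Word →. ℕ} (hU' : OptimalIn (jump A) U') :
    GtCt (KOf U) (KInfOf V) ∧ GtCt (KInfOf V) (KOf U') :=
  ⟨gtCt_KOf_KInfOf hU hV, gtCt_KInfOf_KOf_jump hV.1 hU'⟩

end Hierarchy

/-- For every `i ≥ 0` one has `K^i >ct K^{i,∞}` and `K^{i,∞} >ct K^{i+1}`. -/
theorem stmt2 (i : ℕ) (U : Word →. ℕ) (hU : OptimalIn (emptyJump i) U)
    (V : Word → ℕ →. ℕ) (hV : StronglyUniversal₂In (emptyJump i) V)
    (U' : Word →. ℕ) (hU' : OptimalIn (emptyJump (i + 1)) U') :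
    GtCt (KOf U) (KInfOf V) ∧ GtCt (KInfOf V) (KOf U') :=
  stmt2_general hU.1 hV hU'
end

section
/- Let $\varphi_a$ denote the partial recursive function $\mathbb N\rightharpoonup\mathbb N$ with Gödel number $a$, and let $PR$ be the set of partial recursive functions $\mathbb N\rightharpoonup\mathbb N$. An effective operation is a map $F:PR\to PR$ for which there is a total recursive $f:\mathbb N\to\mathbb N$ with $F(\varphi_a)=\varphi_{f(a)}$ for all $a$; let $\mathrm{Eff}$ be the set of effective operations. The iterators $It_n\in\mathrm{Eff}$ ($n\in\mathbb N$) are defined by $It_0(f)=f$ and $It_{n+1}(f)=It_n(f)\circ f$. A map $G:\{0,1\}^*\to\mathrm{Eff}$ is called effective if there is a total recursive $t:\{0,1\}^*\times\mathbb N\to\mathbb N$ with $G(p)(\varphi_a)=\varphi_{t(p,a)}$ for all $p,a$. An effective map $U:\{0,1\}^*\to\mathrm{Eff}$, $e\mapsto F_e:=U(e)$, is a strongly universal enumeration of the effective operations if there is a total recursive function $\mathrm{comp}:\{0,1\}^*\times\{0,1\}^*\to\{0,1\}^*$ such that the maps $p\mapsto U(\mathrm{comp}(e,p))$, $e\in\{0,1\}^*$,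 are exactly the effective maps $\{0,1\}^*\to\mathrm{Eff}$, and such that for each $e$ there is a constant $c(e)$ with $|\mathrm{comp}(e,p)|\le|p|+c(e)$ for all $p$. Let $(F_e)_{e\in\{0,1\}^*}$ be a strongly universal enumeration of the effective operations. Then the set of pairs $(e,n)\in\{0,1\}^*\times\mathbb N$ such that $F_e=It_n$ (i.e. $e$ is a Gödel number for the iteration functional $It_n$) is $\Pi^0_2$-complete: it is $\Pi^0_2$, and every $\Pi^0_2$ set of integers is many-one reducible to it. -/
open Nat.Partrec (Code)

/-- The partial recursive function `ℕ ⇀ ℕ` with Gödel number `e`. -/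
def phi (e : ℕ) : ℕ →. ℕ := (Denumerable.ofNat Code e).eval

/-- The set `PR(ℕ→ℕ)` of partial recursive functions. -/
def PRFun : Type := {f : ℕ →. ℕ // Nat.Partrec f}

def phiP (e : ℕ) : PRFun := ⟨phi e, Nat.Partrec.Code.exists_code.mpr ⟨_, rfl⟩⟩

/-- `F` is induced by a total recursive function on Gödel numbers (which is then extensional). -/
def IsEffOp (F : PRFun → PRFun) : Prop :=
  ∃ f : ℕ → ℕ, Computable f ∧ ∀ a : ℕ, F (phiP a) = phiP (f a)

/-- The effective operations `PR(ℕ→ℕ) → PR(ℕ→ℕ)`. -/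
def Eff : Type := {F : PRFun → PRFun // IsEffOp F}

/-- Composition in `PR(ℕ→ℕ)`: `(g ∘ f)(x) = g(f(x))`. -/
def compPR (g f : PRFun) : PRFun :=
  ⟨fun x => (f.val x).bind g.val,
    Partrec.nat_iff.1
      ((Partrec.nat_iff.2 f.2).bind ((Partrec.nat_iff.2 g.2).comp Computable.snd))⟩

/-- `It_0(f) = f` and `It_{n+1}(f) = It_n(f) ∘ f`. -/
def ItFun : ℕ → PRFun → PRFun
  | 0 => fun f => f
  | n + 1 => fun f => compPR (ItFun n f) f

theorem isEffOp_ItFun (n : ℕ) : IsEffOp (ItFun n) := by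
  induction n with
  | zero => exact ⟨id, Computable.id, fun _ => rfl⟩
  | succ n ih =>
    obtain ⟨f, hf, h⟩ := ih
    refine ⟨fun a => Encodable.encode
      (Code.comp (Denumerable.ofNat Code (f a)) (Denumerable.ofNat Code a)), ?_, ?_⟩
    · exact Computable.encode.comp
        ((Nat.Partrec.Code.primrec₂_comp.to_comp).comp
          ((Computable.ofNat Code).comp hf) (Computable.ofNat Code))
    · intro a
      apply Subtype.ext
      simp only [ItFun, h a]
      simp only [compPR, phiP, phi, Denumerable.ofNat_encode]
      rfl

/-- The iterators, as effective operations. -/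
def It (n : ℕ) : Eff := ⟨ItFun n, isEffOp_ItFun n⟩

/-- An effective map `{0,1}* → Eff`: the operations `G p` are given by total recursive functions
on Gödel numbers, uniformly in the word `p`. -/
def IsEffMap (G : List Bool → Eff) : Prop :=
  ∃ t : List Bool → ℕ → ℕ, Computable₂ t ∧
    ∀ (p : List Bool) (a : ℕ), (G p).val (phiP a) = phiP (t p a)

/-- `U` is effective, and the maps `U_e : p ↦ U (comp e p)`, `e ∈ {0,1}*`, enumerate the class of
all effective maps `{0,1}* → Eff`. -/
def IsUniversalVia (U : List Bool → Eff) (comp : List Bool → List Bool → List Bool) : Prop :=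
  IsEffMap U ∧ Computable₂ comp ∧
    Set.range (fun e : List Bool => fun p : List Bool => U (comp e p)) = {G | IsEffMap G}

/-- `U` is strongly universal: universal via a compiler `comp` which, for each fixed `e`,
increases lengths by at most a constant. -/
def IsStronglyUniversal (U : List Bool → Eff) : Prop :=
  ∃ comp : List Bool → List Bool → List Bool, IsUniversalVia U comp ∧
    ∀ e : List Bool, ∃ c : ℕ, ∀ p : List Bool, (comp e p).length ≤ p.length + c

/-- `A` is `Σ⁰₂`: `A = {x : ∃y ∀z R(x,y,z)}` for some recursive relation `R`. -/
def IsSigma2 {α : Type} [Primcodable α] (A : Set α) : Prop :=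
  ∃ r : α → ℕ → ℕ → Bool, Computable (fun x : α × ℕ × ℕ => r x.1 x.2.1 x.2.2) ∧
    ∀ x : α, x ∈ A ↔ ∃ y : ℕ, ∀ z : ℕ, r x y z = true

/-- `A` is `Π⁰₂`: the complement of `A` is `Σ⁰₂`. -/
def IsPi2 {α : Type} [Primcodable α] (A : Set α) : Prop := IsSigma2 Aᶜ

/-- `A` is `Π⁰₂`-complete: it is `Π⁰₂`, and every `Π⁰₂` set of integers is many-one reducible
to it. -/
def IsPi2Complete {α : Type} [Primcodable α] (A : Set α) : Prop :=
  IsPi2 A ∧ ∀ B : Set ℕ, IsPi2 B → ManyOneReducible (· ∈ B) (· ∈ A)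

/-
Two partial recursive functions with recursive parameters agree at an argument iff their monotone
finite stages coincide at arbitrarily late stages, so agreement at all arguments is `Π⁰₂`. An
identity of effective operations given uniformly on Gödel numbers is of this kind.

Conversely, let `B = {x | ∀ m, D x m}` with `D` recursively enumerable, and let `F` be an effective
operation with `F f` total for some `f`. Restricting all values of `F` to `D x` gives effective
operations, uniformly in `x`; the restricted operation is `F` itself iff `x ∈ B`. A numbering to
which all effective sequences of operations reduce supplies the index; here `F = It 0`.
-/

open Encodable Filter

section Arithmetical

variable {α : Type} [Primcodable α] {A : Set α}

theorem isPi2_of_forall_exists {β : Type} [Denumerable β] {r : α → β → ℕ → Bool}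
    (hr : Computable fun x : α × β × ℕ => r x.1 x.2.1 x.2.2)
    (hA : ∀ x, x ∈ A ↔ ∀ y, ∃ z, r x y z = true) : IsPi2 A := by
  refine ⟨fun x n z => !r x (Denumerable.ofNat β n) z, ?_, fun x => ?_⟩
  · exact Primrec.not.to_comp.comp <| hr.comp <| Computable.fst.pair <|
      ((Computable.ofNat β).comp (Computable.fst.comp Computable.snd)).pair
        (Computable.snd.comp Computable.snd)
  · rw [Set.mem_compl_iff, hA, (Denumerable.eqv β).symm.surjective.forall]
    simp [Denumerable.eqv]

theorem rePred_exists {r : α → ℕ → Bool} (hr : Computable₂ r) :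
    REPred fun x => ∃ n, r x n = true :=
  (Partrec.rfind hr.partrec₂).dom_re.of_eq fun x => by
    simp [Nat.rfind_dom]

theorem IsPi2.exists_rePred (hA : IsPi2 A) :
    ∃ D : α → ℕ → Prop, REPred (fun p : α × ℕ => D p.1 p.2) ∧ ∀ x, x ∈ A ↔ ∀ y, D x y := by
  obtain ⟨r, hr, hrA⟩ := hA
  refine ⟨fun x y => ∃ z, (!r x y z) = true, rePred_exists (Primrec.not.to_comp.comp ?_), ?_⟩
  · exact hr.comp <| (Computable.fst.comp Computable.fst).pair <|
      (Computable.snd.comp Computable.fst).pair Computable.snd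
  · intro x
    simpa using (hrA x).not

theorem rePred_comp {β : Type} [Primcodable β] {p : β → Prop} (hp : REPred p) {h : α → β}
    (hh : Computable h) : REPred fun x => p (h x) :=
  Partrec.comp hp hh

theorem rePred_section {D : α → ℕ → Prop} (hD : REPred fun p : α × ℕ => D p.1 p.2) (x : α) :
    REPred (D x) :=
  rePred_comp hD ((Computable.const x).pair Computable.id)

end Arithmetical

section Stages

variable {α : Type} [Primcodable α] {σ : Type} [Primcodable σ]

theorem exists_rfindOpt_of_partrec {f : α →. σ} (hf : Partrec f) :
    ∃ F : α → ℕ → Option σ, Computable₂ F ∧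
      (∀ a {b m n}, m ≤ n → b ∈ F a m → b ∈ F a n) ∧ ∀ a, f a = Nat.rfindOpt (F a) := by
  obtain ⟨c, hc⟩ := Code.exists_code.1 hf
  let F : α → ℕ → Option σ := fun a k => (Code.evaln k c (encode a)).bind decode
  have hmem : ∀ {a b k}, b ∈ F a k ↔ ∃ v ∈ Code.evaln k c (encode a), b ∈ (decode v : Option σ) :=
    Option.mem_bind_iff
  have hmono : ∀ a {b m n}, m ≤ n → b ∈ F a m → b ∈ F a n := fun a b m n hmn hb =>
    have ⟨v, hv, hvb⟩ := hmem.1 hb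
    hmem.2 ⟨v, Code.evaln_mono hmn hv, hvb⟩
  refine ⟨F, ?_, hmono, fun a => Part.ext fun b => ?_⟩
  · exact Computable.option_bind
      (Code.primrec_evaln.to_comp.comp
        ((Computable.snd.pair (Computable.const c)).pair (Computable.encode.comp Computable.fst)))
      (Computable.decode.comp Computable.snd)
  · have hcode : b ∈ f a ↔ ∃ v ∈ c.eval (encode a), b ∈ (decode v : Option σ) := by
      simp [hc]
    rw [Nat.rfindOpt_mono (hmono a), hcode]
    simp only [Code.evaln_complete, hmem]
    grind

theorem rfindOpt_eq_iff_frequently {σ : Type*} {F G : ℕ → Option σ}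
    (hF : ∀ {b m n}, m ≤ n → b ∈ F m → b ∈ F n) (hG : ∀ {b m n}, m ≤ n → b ∈ G m → b ∈ G n) :
    Nat.rfindOpt F = Nat.rfindOpt G ↔ ∃ᶠ k in atTop, F k = G k := by
  rw [frequently_atTop]
  constructor
  · intro h k
    by_cases hdom : (Nat.rfindOpt F).Dom
    · obtain ⟨b, hb⟩ := Part.dom_iff_mem.1 hdom
      obtain ⟨m, hm⟩ := (Nat.rfindOpt_mono hF).1 hb
      obtain ⟨n, hn⟩ := (Nat.rfindOpt_mono hG).1 (h ▸ hb)
      exact ⟨max k (max m n), le_max_left _ _,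
        (hF (by omega) hm).trans (hG (by omega) hn).symm⟩
    · have hFk : F k = none := Option.eq_none_iff_forall_not_mem.2 fun b hb =>
        hdom (Nat.rfindOpt_dom.2 ⟨k, b, hb⟩)
      have hGk : G k = none := Option.eq_none_iff_forall_not_mem.2 fun b hb =>
        hdom (h ▸ Nat.rfindOpt_dom.2 ⟨k, b, hb⟩)
      exact ⟨k, le_rfl, hFk.trans hGk.symm⟩
  · intro h
    ext b
    rw [Nat.rfindOpt_mono hF, Nat.rfindOpt_mono hG]
    constructor
    · rintro ⟨k, hk⟩
      obtain ⟨l, hkl, hl⟩ := h k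
      exact ⟨l, hl ▸ hF hkl hk⟩
    · rintro ⟨k, hk⟩
      obtain ⟨l, hkl, hl⟩ := h k
      exact ⟨l, hl ▸ hG hkl hk⟩

theorem isPi2_setOf_forall_eq {β : Type} [Denumerable β] {f g : α → β →. σ}
    (hf : Partrec₂ f) (hg : Partrec₂ g) : IsPi2 {x | ∀ y, f x y = g x y} := by
  classical
  obtain ⟨F, hFc, hF, hfF⟩ := exists_rfindOpt_of_partrec hf
  obtain ⟨G, hGc, hG, hgG⟩ := exists_rfindOpt_of_partrec hg
  refine isPi2_of_forall_exists (β := β × ℕ)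
    (r := fun x y l => decide (y.2 ≤ l) && decide (F (x, y.1) l = G (x, y.1) l)) ?_ fun x => ?_
  · have hl : Computable fun p : α × (β × ℕ) × ℕ => p.2.2 := Computable.snd.comp Computable.snd
    have hy : Computable fun p : α × (β × ℕ) × ℕ => (p.1, p.2.1.1) :=
      Computable.fst.pair (Computable.fst.comp (Computable.fst.comp Computable.snd))
    have hk : Computable fun p : α × (β × ℕ) × ℕ => p.2.1.2 :=
      Computable.snd.comp (Computable.fst.comp Computable.snd)
    exact Primrec.and.to_comp.comp (Primrec.nat_le.decide.to_comp.comp hk hl)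
      (Primrec.eq.decide.to_comp.comp (hFc.comp hy hl) (hGc.comp hy hl))
  · have hxy : ∀ y, f x y = g x y ↔ ∀ k, ∃ l ≥ k, F (x, y) l = G (x, y) l := fun y => by
      rw [hfF (x, y), hgG (x, y), rfindOpt_eq_iff_frequently (hF _) (hG _), frequently_atTop]
    simp [hxy, Prod.forall]

end Stages

theorem phiP_surjective : Function.Surjective phiP := fun f => by
  obtain ⟨c, hc⟩ := Code.exists_code.1 f.2
  exact ⟨encode c, Subtype.ext (by simpa [phiP, phi] using hc)⟩

theorem partrec₂_phi : Partrec₂ phi :=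
  Code.eval_part.comp ((Computable.ofNat Code).comp Computable.fst) Computable.snd

section Families

variable {α : Type} [Primcodable α]

theorem exists_computable_phi_eq {f : α → ℕ →. ℕ} (hf : Partrec₂ f) :
    ∃ s : α → ℕ, Computable s ∧ ∀ x, phi (s x) = f x := by
  obtain ⟨c, hc⟩ := Code.exists_code.1 hf
  refine ⟨fun x => encode (Code.curry c (encode x)), ?_, fun x => ?_⟩
  · exact Computable.encode.comp <|
      Code.primrec₂_curry.to_comp.comp (Computable.const c) Computable.encode
  · funext m
    simp [phi, Code.eval_curry, hc, Part.map_id']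

/-- A family of operations given by total recursive functions on Gödel numbers, uniformly in the
parameter: `IsEffMap` with an arbitrary parameter type and unbundled values, so that effectiveness
of the individual operations is a consequence (`IsEffFamily.isEffOp`). -/
def IsEffFamily (G : α → PRFun → PRFun) : Prop :=
  ∃ t : α → ℕ → ℕ, Computable₂ t ∧ ∀ x a, G x (phiP a) = phiP (t x a)

theorem isEffFamily_iff_partrec {G : α → PRFun → PRFun} :
    IsEffFamily G ↔ Partrec₂ fun (x : α) (y : ℕ × ℕ) => (G x (phiP y.1)).val y.2 := by
  constructor
  · rintro ⟨t, ht, hGt⟩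
    simp only [hGt]
    exact partrec₂_phi.comp
      (ht.comp Computable.fst (Computable.fst.comp Computable.snd))
      (Computable.snd.comp Computable.snd)
  · intro hG
    have hG' : Partrec₂ fun (p : α × ℕ) (m : ℕ) => (G p.1 (phiP p.2)).val m :=
      hG.comp (Computable.fst.comp Computable.fst)
        ((Computable.snd.comp Computable.fst).pair Computable.snd)
    obtain ⟨s, hs, hsG⟩ := exists_computable_phi_eq hG'
    exact ⟨fun x a => s (x, a), hs, fun x a => Subtype.ext (hsG (x, a)).symm⟩

theorem IsEffOp.isEffFamily {F : PRFun → PRFun} (hF : IsEffOp F) :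
    IsEffFamily fun _ : α => F := by
  obtain ⟨t, ht, hFt⟩ := hF
  exact ⟨fun _ => t, ht.comp Computable.snd, fun _ => hFt⟩

namespace IsEffFamily

variable {G H : α → PRFun → PRFun}

theorem comp {β : Type} [Primcodable β] (hG : IsEffFamily G) {h : β → α} (hh : Computable h) :
    IsEffFamily fun y => G (h y) := by
  obtain ⟨t, ht, hGt⟩ := hG
  exact ⟨fun y => t (h y), ht.comp (hh.comp Computable.fst) Computable.snd, fun y => hGt (h y)⟩

theorem isEffOp (hG : IsEffFamily G) (x : α) : IsEffOp (G x) := by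
  obtain ⟨t, ht, hGt⟩ := hG
  exact ⟨t x, ht.comp (Computable.const x) Computable.id, hGt x⟩

theorem isPi2_setOf_eq (hG : IsEffFamily G) (hH : IsEffFamily H) : IsPi2 {x | G x = H x} := by
  have hset : {x | G x = H x} =
      {x | ∀ y : ℕ × ℕ, (G x (phiP y.1)).val y.2 = (H x (phiP y.1)).val y.2} := by
    ext x
    simp only [Set.mem_ofPred_eq, funext_iff, phiP_surjective.forall, Prod.forall]
    exact forall_congr' fun a => Subtype.ext_iff.trans funext_iff
  rw [hset]
  exact isPi2_setOf_forall_eq (isEffFamily_iff_partrec.1 hG) (isEffFamily_iff_partrec.1 hH)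

end IsEffFamily

theorem itFun_succ_apply' (n : ℕ) (f : PRFun) (m : ℕ) :
    (ItFun (n + 1) f).val m = ((ItFun n f).val m).bind f.val := by
  induction n generalizing m with
  | zero => rfl
  | succ n ih =>
    calc (ItFun (n + 2) f).val m
        = (f.val m).bind fun v => ((ItFun n f).val v).bind f.val :=
          congrArg (f.val m).bind (funext ih)
      _ = ((ItFun (n + 1) f).val m).bind f.val := (Part.bind_assoc _ _ _).symm

theorem isEffFamily_itFun : IsEffFamily ItFun := by
  have hphi : Partrec fun p : ℕ × ℕ × ℕ => phi p.2.1 p.2.2 :=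
    partrec₂_phi.comp (Computable.fst.comp Computable.snd) (Computable.snd.comp Computable.snd)
  refine isEffFamily_iff_partrec.2 ((Partrec.nat_rec Computable.fst hphi
    (h := fun p q => phi p.2.1 q.2) ?_).of_eq ?_)
  · exact partrec₂_phi.comp (Computable.fst.comp (Computable.snd.comp Computable.fst))
      (Computable.snd.comp Computable.snd)
  · rintro ⟨n, a, m⟩
    induction n with
    | zero => rfl
    | succ n ih => exact (congrArg (Part.bind · _) ih).trans (itFun_succ_apply' n _ m).symm

/-- The restriction of `f` to the arguments in the recursively enumerable set `D`; for total `f`, it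
equals `f` only if every number is in `D`, which codes universal statements into equations. -/
def PRFun.restrict (f : PRFun) (D : ℕ → Prop) (hD : REPred D) : PRFun :=
  ⟨fun m => Part.assert (D m) fun _ => f.val m, Partrec.nat_iff.1 <| by
    have hf : Partrec₂ fun (m : ℕ) (_ : Unit) => f.val m :=
      (Partrec.nat_iff.2 f.2).comp Computable.fst
    exact (hD.bind hf).of_eq fun m => Part.ext fun v => by simp⟩

theorem PRFun.restrict_comp_eq_self_iff {F : PRFun → PRFun} {f : PRFun}
    (hf : ∀ m, ((F f).val m).Dom) {D : ℕ → Prop} {hD : REPred D} :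
    (fun g => (F g).restrict D hD) = F ↔ ∀ m, D m := by
  constructor
  · intro h m
    have hm : (((F f).restrict D hD).val m).Dom := by
      rw [congrFun h f]
      exact hf m
    exact hm.1
  · intro h
    funext g
    exact Subtype.ext <| funext fun m => Part.assert_pos (h m)

theorem IsEffFamily.restrict {G : α → PRFun → PRFun} (hG : IsEffFamily G) {D : α → ℕ → Prop}
    (hD : REPred fun p : α × ℕ => D p.1 p.2) :
    IsEffFamily fun x f => (G x f).restrict (D x) (rePred_section hD x) := by
  refine isEffFamily_iff_partrec.2 ?_
  have hD' : REPred fun p : α × ℕ × ℕ => D p.1 p.2.2 :=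
    rePred_comp hD (Computable.fst.pair (Computable.snd.comp Computable.snd))
  have hG' : Partrec₂ fun (p : α × ℕ × ℕ) (_ : Unit) => (G p.1 (phiP p.2.1)).val p.2.2 :=
    (isEffFamily_iff_partrec.1 hG).comp (Computable.fst.comp Computable.fst)
      (Computable.snd.comp Computable.fst)
  exact (hD'.bind hG').of_eq fun p => Part.ext fun v => by simp [PRFun.restrict]

end Families

theorem Eff.ext_iff {F G : Eff} : F = G ↔ F.val = G.val :=
  Subtype.ext_iff

section Numberings

variable {α : Type} [Primcodable α]

/-- A principal numbering of `Eff`: the numbering is effective, and every effective sequence of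
effective operations is recursively reducible to it. -/
structure IsPrincipal (U : α → Eff) : Prop where
  isEffFamily : IsEffFamily fun e => (U e).val
  exists_index : ∀ G : ℕ → Eff, (IsEffFamily fun n => (G n).val) →
    ∃ h : ℕ → α, Computable h ∧ ∀ n, U (h n) = G n

theorem IsPrincipal.manyOneReducible {U : α → Eff} (hU : IsPrincipal U) {F : Eff} {f : PRFun}
    (hf : ∀ m, ((F.val f).val m).Dom) {B : Set ℕ} (hB : IsPi2 B) :
    ManyOneReducible (· ∈ B) (U · = F) := by
  obtain ⟨D, hD, hBD⟩ := hB.exists_rePred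
  have hG := F.2.isEffFamily.restrict hD
  let G : ℕ → Eff := fun x => ⟨_, hG.isEffOp x⟩
  obtain ⟨h, hh, hUh⟩ := hU.exists_index G hG
  refine ⟨h, hh, fun x => ?_⟩
  calc x ∈ B ↔ ∀ m, D x m := hBD x
    _ ↔ (fun g => (F.val g).restrict (D x) (rePred_section hD x)) = F.val :=
      (PRFun.restrict_comp_eq_self_iff hf).symm
    _ ↔ G x = F := (Eff.ext_iff (F := G x)).symm
    _ ↔ U (h x) = F := by rw [hUh]

theorem IsUniversalVia.isPrincipal {U : List Bool → Eff}
    {comp : List Bool → List Bool → List Bool} (hU : IsUniversalVia U comp) : IsPrincipal U := by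
  obtain ⟨hUeff, hcomp, hrange⟩ := hU
  refine ⟨hUeff, fun G hG => ?_⟩
  have hG' : IsEffMap fun p => G p.length := hG.comp Computable.list_length
  obtain ⟨e, he⟩ : (fun p => G p.length) ∈ Set.range fun e p => U (comp e p) := hrange ▸ hG'
  let word : ℕ → List Bool := fun n => (List.range n).map fun _ => true
  have hword : Computable word :=
    (Primrec.list_map Primrec.list_range (Primrec.const true).to₂).to_comp
  refine ⟨fun n => comp e (word n), hcomp.comp (Computable.const e) hword, fun n => ?_⟩
  simpa [word] using congrFun he (word n)

theorem stmt3_general {U : α → Eff} (hU : IsPrincipal U) :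
    IsPi2Complete {q : α × ℕ | U q.1 = It q.2} := by
  refine ⟨?_, fun B hB => ?_⟩
  · have heq : IsPi2 {q : α × ℕ | (U q.1).val = (It q.2).val} :=
      (hU.isEffFamily.comp Computable.fst).isPi2_setOf_eq
        (isEffFamily_itFun.comp Computable.snd)
    exact (Set.ext fun _ => Eff.ext_iff.symm) ▸ heq
  · obtain ⟨h, hh, hBh⟩ := hU.manyOneReducible (F := It 0)
      (f := ⟨Part.some, Nat.Partrec.some⟩) (fun _ => trivial) hB
    exact ⟨fun x => (h x, 0), hh.pair (Computable.const 0), hBh⟩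

end Numberings

/-- The set of pairs `(e,n)` such that `U(e) = It_n` is `Π⁰₂`-complete. -/
theorem stmt3 (U : List Bool → Eff) (hU : IsStronglyUniversal U) :
    IsPi2Complete {q : List Bool × ℕ | U q.1 = It q.2} := by
  obtain ⟨_, hcomp, -⟩ := hU
  exact stmt3_general hcomp.isPrincipal
end

section
/- Programs are finite binary words $p\in\{0,1\}^*$, with length $|p|$; for $f,g:\mathbb N\to\mathbb N$, $f=_{\mathrm{ct}}g$ means that there is a constant $c$ with $|f(n)-g(n)|\le c$ for all $n$. Let $PR(\mathbb N\to\mathbb N)$ be the set of partial recursive functions $\mathbb N\rightharpoonup\mathbb N$; a map $G:\{0,1\}^*\to PR(\mathbb N\to\mathbb N)$ is *partial-recursively given* if some total recursive function sends each $p$ to a Gödel number of $G(p)$. Let $U:\{0,1\}^*\to PR(\mathbb N\to\mathbb N)$ be a strongly universal enumeration: $U$ is partial-recursively given, and there is a total recursive $\mathrm{comp}:\{0,1\}^*\times\{0,1\}^*\to\{0,1\}^*$ such that the maps $p\mapsto U(\mathrm{comp}(e,p))$, $e\in\{0,1\}^*$, are exactly the partial-recursively given maps, and for each $e$ there is a constant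 $c(e)$ with $|\mathrm{comp}(e,p)|\le|p|+c(e)$ for all $p$. Put $$K^{\mathbb N}_{card}(n)=\min\{|p| : \mathrm{dom}(U(p))\text{ is finite with exactly } n\text{ elements}\}.$$ Let $K^\infty(n)$ be the shortest length of a program which, through a possibly infinite computation, outputs $n$ in unary, i.e. emits the symbol $1$ at exactly $n$ steps. Here programs are run on a strongly universal device, in either of the following two senses. (a) The device is a partial recursive $V:\{0,1\}^*\times\mathbb N\rightharpoonup\mathbb N$, where $p$ emits a symbol at step $t$ iff $V(p,t)$ converges. Strongly universal means that, for some total recursive $\mathrm{comp}$ with $|\mathrm{comp}(e,p)|\le |p|+c(e)$, the functions $(p,t)\mapsto V(\mathrm{comp}(e,p),t)$ are exactly the partial recursive functions $\{0,1\}^*\times\mathbb N\rightharpoonup\mathbb N$. (b) The device is a total recursive $M:\{0,1\}^*\times\mathbb N\to\{0,1\}$, where $p$ emits a symbol at step $t$ iff $M(p,t)=1$. Strongly universal means that, for some total recursive $\mathrm{comp}$ with $|\mathrm{comp}(e,p)|\le|p|+c(e)$, for every total recursive $W:\{0,1\}^*\times\mathbb N\to\{0,1\}$ there is $e$ such that for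 all $p$ the number (finite or infinite) of $t$ with $M(\mathrm{comp}(e,p),t)=1$ equals the number of $t$ with $W(p,t)=1$. Then, for every such $U$ and every such device, in sense (a) as well as in sense (b), $$K^{\mathbb N}_{card}=_{\mathrm{ct}}K^\infty .$$ -/
open Nat.Partrec (Code)

/-- `f =ct g` : there is a constant `c` with `|f(n) − g(n)| ≤ c` for all `n`. -/
def EqCt (f g : ℕ → ℕ) : Prop := ∃ c : ℕ, ∀ n : ℕ, |(f n : ℤ) - (g n : ℤ)| ≤ (c : ℤ)

/-- A map `G : {0,1}* → PR(ℕ→ℕ)` is partial-recursively given: some total recursive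
function sends each program `p` to a Gödel number of `G p`. -/
def PRGiven (G : Word → PRFun) : Prop :=
  ∃ h : Word → ℕ, Computable h ∧ ∀ p : Word, (G p).val = phi (h p)

/-- `U^E : {0,1}* → PR(ℕ→ℕ)` is a strongly universal enumeration of the partial recursive
functions `ℕ ⇀ ℕ`: it is itself partial-recursively given, and, for a total recursive `comp`,
the maps `p ↦ U^E(comp(e,p))` are exactly the partial-recursively given maps, with
`|comp(e,p)| ≤ |p| + c(e)`. -/
def StronglyUniversalEnum (U : Word → PRFun) : Prop :=
  PRGiven U ∧
    ∃ comp : Word → Word → Word, Computable₂ comp ∧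
      (∀ e : Word, PRGiven fun p => U (comp e p)) ∧
      (∀ G : Word → PRFun, PRGiven G → ∃ e : Word, ∀ p : Word, U (comp e p) = G p) ∧
      (∀ e : Word, ∃ c : ℕ, ∀ p : Word, (comp e p).length ≤ p.length + c)

/-- The cardinal Kolmogorov complexity:
`K^ℕ_card(n) = min{|p| : dom(U^E(p))` is finite with exactly `n` elements`}`. -/
noncomputable def Kcard (U : Word → PRFun) (n : ℕ) : ℕ :=
  sInf {k : ℕ | ∃ p : Word, p.length = k ∧
    {x : ℕ | ((U p).val x).Dom}.Finite ∧ {x : ℕ | ((U p).val x).Dom}.ncard = n}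

/-- `V : {0,1}* × ℕ ⇀ ℕ` is a strongly universal partial recursive function; convergence of
`V(p,t)` is read as: program `p` emits an output symbol `1` at step `t` of its possibly
infinite computation. -/
def StronglyUniversalPartrec (V : Word → ℕ →. ℕ) : Prop :=
  Partrec₂ V ∧
    ∃ comp : Word → Word → Word, Computable₂ comp ∧
      (∀ e : Word, Partrec₂ fun p => V (comp e p)) ∧
      (∀ W : Word → ℕ →. ℕ, Partrec₂ W →
        ∃ e : Word, ∀ (p : Word) (t : ℕ), V (comp e p) t = W p t) ∧
      (∀ e : Word, ∃ c : ℕ, ∀ p : Word, (comp e p).length ≤ p.length + c)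

/-- `K^∞(n)` : the length of a shortest (possibly non halting) program which outputs
`n` in unary, i.e. emits exactly `n` output symbols, where emission at step `t` is
convergence of `V(p,t)`. -/
noncomputable def KInf (V : Word → ℕ →. ℕ) (n : ℕ) : ℕ :=
  sInf {k : ℕ | ∃ p : Word, p.length = k ∧
    {t : ℕ | (V p t).Dom}.Finite ∧ {t : ℕ | (V p t).Dom}.ncard = n}

/-- A strongly universal machine with unary output and possibly infinite computations, run
step by step: `M p t = true` means that program `p` emits the symbol `1` at step `t`, which is
decidable. Every other such machine `W` is emulated through a compiler `comp(e,·)` that adds a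
bounded number of bits: the emulation has the same (finite or infinite) unary output, though
not necessarily at the same steps. -/
def StronglyUniversalUnary (M : Word → ℕ → Bool) : Prop :=
  Computable₂ M ∧
    ∃ comp : Word → Word → Word, Computable₂ comp ∧
      (∀ W : Word → ℕ → Bool, Computable₂ W → ∃ e : Word, ∀ p : Word,
        {t : ℕ | M (comp e p) t = true}.encard = {t : ℕ | W p t = true}.encard) ∧
      (∀ e : Word, ∃ c : ℕ, ∀ p : Word, (comp e p).length ≤ p.length + c)

/-- `K^∞(n)` for a machine run step by step: the length of a shortest program whose possibly
infinite computation emits exactly `n` output symbols. -/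
noncomputable def KInfStep (M : Word → ℕ → Bool) (n : ℕ) : ℕ :=
  sInf {k : ℕ | ∃ p : Word, p.length = k ∧
    {t : ℕ | M p t = true}.Finite ∧ {t : ℕ | M p t = true}.ncard = n}

/-!
All three devices compute families of sets of natural numbers, and all three complexities depend
only on the cardinalities of the sets in the family. A device in any of the three senses gives a
uniformly recursively enumerable family which, up to cardinality and a bounded overhead in program
length, emulates every such family; any two families of this kind have equal complexity up to a
constant. The only point of substance is that a step-by-step machine can realise the cardinality
of every recursively enumerable set: given a code, it emits a symbol at step `⟨x, s⟩` exactly when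
the computation on `x` first halts at stage `s`, so each element of the domain is counted once.
-/

/-- The complexity of `n` relative to a family of sets indexed by programs: the length of a shortest
`p` for which `A p` is finite with exactly `n` elements, and `0` if there is none. It unfolds to
`Kcard`, `KInf` and `KInfStep` when `A p` is the set of arguments or steps counted for `p`. -/
noncomputable def cardComplexity {α : Type*} (A : Word → Set α) (n : ℕ) : ℕ :=
  sInf {k : ℕ | ∃ p : Word, p.length = k ∧ (A p).Finite ∧ (A p).ncard = n}

/-- `A` emulates `B` up to cardinality: programs for `B` translate, with boundedly many additional
bits, into programs for `A` whose sets have the same finite or infinite size. No computability is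
asked of the translation. -/
def CardEmulates {α β : Type*} (A : Word → Set α) (B : Word → Set β) : Prop :=
  ∃ (f : Word → Word) (c : ℕ), ∀ p : Word,
    (A (f p)).encard = (B p).encard ∧ (f p).length ≤ p.length + c

/-- A uniformly recursively enumerable family of sets of natural numbers: membership is recursively
enumerable jointly in the index and the element. These are the families that devices compute. -/
def UniformlyRE {α : Type*} [Primcodable α] (A : α → Set ℕ) : Prop :=
  REPred fun x : α × ℕ => x.2 ∈ A x.1

/-- Strong universality for families of sets that are considered only up to cardinality, the common
abstraction of the three kinds of device. -/
structure IsCardUniversal (A : Word → Set ℕ) : Prop where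
  uniformlyRE : UniformlyRE A
  cardEmulates : ∀ B : Word → Set ℕ, UniformlyRE B → CardEmulates A B

section Emulation

variable {α β : Type*}

theorem finite_and_ncard_eq_congr {s : Set α} {t : Set β} (h : s.encard = t.encard) (n : ℕ) :
    s.Finite ∧ s.ncard = n ↔ t.Finite ∧ t.ncard = n := by
  simp only [← Set.encard_lt_top_iff, Set.ncard, h]

theorem cardComplexity_le_length {A : Word → Set α} {n : ℕ} {p : Word}
    (hp : (A p).Finite ∧ (A p).ncard = n) : cardComplexity A n ≤ p.length :=
  Nat.sInf_le ⟨p, rfl, hp⟩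

theorem exists_length_eq_cardComplexity {A : Word → Set α} {n : ℕ}
    (h : ∃ p : Word, (A p).Finite ∧ (A p).ncard = n) :
    ∃ p : Word, p.length = cardComplexity A n ∧ (A p).Finite ∧ (A p).ncard = n := by
  obtain ⟨p, hp⟩ := h
  have h_nonempty : {k : ℕ | ∃ p : Word, p.length = k ∧ (A p).Finite ∧ (A p).ncard = n}.Nonempty :=
    ⟨p.length, p, rfl, hp⟩
  exact Nat.sInf_mem h_nonempty

theorem cardComplexity_eq_zero {A : Word → Set α} {n : ℕ}
    (h : ¬ ∃ p : Word, (A p).Finite ∧ (A p).ncard = n) : cardComplexity A n = 0 :=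
  Nat.sInf_eq_zero.2 <| .inr <| Set.eq_empty_of_forall_notMem fun _ ⟨p, _, hp⟩ => h ⟨p, hp⟩

theorem CardEmulates.exists_cardComplexity_le {A : Word → Set α} {B : Word → Set β}
    (hAB : CardEmulates A B) (hBA : CardEmulates B A) :
    ∃ c : ℕ, ∀ n : ℕ, cardComplexity A n ≤ cardComplexity B n + c := by
  obtain ⟨f, c, hf⟩ := hAB
  obtain ⟨g, _, hg⟩ := hBA
  refine ⟨c, fun n => ?_⟩
  by_cases hn : ∃ p : Word, (A p).Finite ∧ (A p).ncard = n
  · obtain ⟨p, hp⟩ := hn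
    obtain ⟨q, hq_length, hq⟩ := exists_length_eq_cardComplexity
      ⟨g p, (finite_and_ncard_eq_congr (hg p).1 n).2 hp⟩
    calc cardComplexity A n ≤ (f q).length :=
          cardComplexity_le_length ((finite_and_ncard_eq_congr (hf q).1 n).2 hq)
      _ ≤ q.length + c := (hf q).2
      _ = cardComplexity B n + c := by rw [hq_length]
  · rw [cardComplexity_eq_zero hn]
    exact Nat.zero_le _

theorem CardEmulates.eqCt {A : Word → Set α} {B : Word → Set β} (hAB : CardEmulates A B)
    (hBA : CardEmulates B A) : EqCt (cardComplexity A) (cardComplexity B) := by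
  obtain ⟨c, hc⟩ := hAB.exists_cardComplexity_le hBA
  obtain ⟨d, hd⟩ := hBA.exists_cardComplexity_le hAB
  refine ⟨c + d, fun n => ?_⟩
  have hc_n := hc n
  have hd_n := hd n
  rw [abs_le]
  omega

theorem IsCardUniversal.eqCt {A B : Word → Set ℕ} (hA : IsCardUniversal A)
    (hB : IsCardUniversal B) : EqCt (cardComplexity A) (cardComplexity B) :=
  (hA.cardEmulates B hB.uniformlyRE).eqCt (hB.cardEmulates A hA.uniformlyRE)

end Emulation

section UniformlyRE

variable {α : Type*} [Primcodable α]

theorem exists_computable_code_eval_eq {f : α → ℕ →. ℕ} (hf : Partrec₂ f) :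
    ∃ h : α → Code, Computable h ∧ ∀ a : α, (h a).eval = f a := by
  obtain ⟨c, hc⟩ := Code.exists_code.1 hf
  obtain ⟨curry, hcurry, hcurry_eval⟩ := Code.smn
  refine ⟨fun a => curry c (Encodable.encode a),
    hcurry.comp (Computable.const c) Computable.encode, fun a => funext fun t => ?_⟩
  calc (curry c (Encodable.encode a)).eval t
      = c.eval (Encodable.encode (a, t)) := hcurry_eval _ _ _
    _ = f a t := by
      simp only [hc, Encodable.encodek, Part.coe_some, Part.bind_some]
      exact Part.map_id' (fun _ => rfl) _

theorem uniformlyRE_dom {f : α → ℕ →. ℕ} (hf : Partrec₂ f) :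
    UniformlyRE fun a => {t : ℕ | (f a t).Dom} :=
  hf.dom_re

theorem uniformlyRE_of_computable₂ {W : α → ℕ → Bool} (hW : Computable₂ W) :
    UniformlyRE fun a => {t : ℕ | W a t = true} :=
  (ComputablePred.computable_iff.2 ⟨_, hW, rfl⟩).to_re

theorem UniformlyRE.exists_partrec₂_dom_eq {A : α → Set ℕ} (hA : UniformlyRE A) :
    ∃ f : α → ℕ →. ℕ, Partrec₂ f ∧ ∀ a : α, {t : ℕ | (f a t).Dom} = A a := by
  refine ⟨fun a t => (Part.assert (t ∈ A a) fun _ => Part.some ()).map fun _ => 0,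
    Partrec.map hA (Computable.const 0).to₂, fun a => ?_⟩
  ext t
  exact ⟨fun ⟨ht, _⟩ => ht, fun ht => ⟨ht, trivial⟩⟩

theorem UniformlyRE.exists_computable_code_dom_eq {A : α → Set ℕ} (hA : UniformlyRE A) :
    ∃ h : α → Code, Computable h ∧ ∀ a : α, {t : ℕ | ((h a).eval t).Dom} = A a := by
  obtain ⟨f, hf, hfA⟩ := hA.exists_partrec₂_dom_eq
  obtain ⟨h, hh, hhf⟩ := exists_computable_code_eval_eq hf
  exact ⟨h, hh, fun a => by rw [hhf, hfA]⟩

end UniformlyRE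

/-- Whether the computation of `c` on `x` first halts at stage `s`, where `t` encodes the pair
`(x, s)`; it turns the domain of `c` into a decidable set of the same cardinality. Stage `s` means
fuel `s + 1`, as `Code.evaln` never halts with fuel `0`. -/
def haltsFirstAt (c : Code) (t : ℕ) : Bool :=
  !(Code.evaln t.unpair.2 c t.unpair.1).isSome &&
    (Code.evaln (t.unpair.2 + 1) c t.unpair.1).isSome

theorem haltsFirstAt_pair {c : Code} {x s : ℕ} :
    haltsFirstAt c (Nat.pair x s) = true ↔
      ¬ (Code.evaln s c x).isSome ∧ (Code.evaln (s + 1) c x).isSome := by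
  simp [haltsFirstAt]

theorem computable₂_haltsFirstAt : Computable₂ haltsFirstAt := by
  have h_input : Primrec fun a : Code × ℕ => a.2.unpair.1 :=
    Primrec.fst.comp (Primrec.unpair.comp Primrec.snd)
  have h_stage : Primrec fun a : Code × ℕ => a.2.unpair.2 :=
    Primrec.snd.comp (Primrec.unpair.comp Primrec.snd)
  have h_halts {fuel : Code × ℕ → ℕ} (h_fuel : Primrec fuel) :
      Primrec fun a : Code × ℕ => (Code.evaln (fuel a) a.1 a.2.unpair.1).isSome :=
    Primrec.option_isSome.comp
      (Code.primrec_evaln.comp ((h_fuel.pair Primrec.fst).pair h_input))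
  exact (Primrec.and.comp (Primrec.not.comp (h_halts h_stage))
    (h_halts (Primrec.succ.comp h_stage))).to_comp

theorem monotone_isSome_evaln (c : Code) (x : ℕ) :
    Monotone fun k : ℕ => ((Code.evaln k c x).isSome : Prop) := by
  intro k l hkl hk
  obtain ⟨y, hy⟩ := Option.isSome_iff_exists.1 hk
  exact Option.isSome_iff_exists.2 ⟨y, Code.evaln_mono hkl hy⟩

theorem dom_eval_iff_exists_isSome_evaln {c : Code} {x : ℕ} :
    (c.eval x).Dom ↔ ∃ k : ℕ, (Code.evaln k c x).isSome := by
  simp only [Part.dom_iff_mem, Code.evaln_complete, Option.isSome_iff_exists, Option.mem_def]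
  exact exists_comm

theorem exists_haltsFirstAt_pair_iff {c : Code} {x : ℕ} :
    (∃ s : ℕ, haltsFirstAt c (Nat.pair x s) = true) ↔ (c.eval x).Dom := by
  simp only [haltsFirstAt_pair, dom_eval_iff_exists_isSome_evaln]
  refine ⟨fun ⟨s, _, hs⟩ => ⟨s + 1, hs⟩, fun h => ?_⟩
  exact Nat.exists_not_and_succ_of_not_zero_of_exists (by simp [Code.evaln]) h

theorem haltsFirstAt_pair_unique {c : Code} {x s s' : ℕ}
    (hs : haltsFirstAt c (Nat.pair x s) = true) (hs' : haltsFirstAt c (Nat.pair x s') = true) :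
    s = s' := by
  rw [haltsFirstAt_pair] at hs hs'
  apply le_antisymm
  · by_contra! hlt
    exact hs.1 (monotone_isSome_evaln c x hlt hs'.2)
  · by_contra! hlt
    exact hs'.1 (monotone_isSome_evaln c x hlt hs.2)

theorem bijOn_unpair_fst_haltsFirstAt (c : Code) :
    Set.BijOn (fun t => t.unpair.1) {t : ℕ | haltsFirstAt c t = true}
      {x : ℕ | (c.eval x).Dom} := by
  refine ⟨fun t ht => ?_, fun t ht t' ht' h => ?_, fun x hx => ?_⟩
  · exact exists_haltsFirstAt_pair_iff.1 ⟨t.unpair.2, by simpa using ht⟩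
  · obtain ⟨⟨x, s⟩, rfl⟩ := Nat.pairEquiv.surjective t
    obtain ⟨⟨x', s'⟩, rfl⟩ := Nat.pairEquiv.surjective t'
    obtain rfl : x = x' := by simpa using h
    exact congrArg (Nat.pair x) (haltsFirstAt_pair_unique ht ht')
  · obtain ⟨s, hs⟩ := exists_haltsFirstAt_pair_iff.2 hx
    exact ⟨Nat.pair x s, hs, by simp⟩

theorem UniformlyRE.exists_computable₂_encard_eq {α : Type*} [Primcodable α] {A : α → Set ℕ}
    (hA : UniformlyRE A) : ∃ W : α → ℕ → Bool, Computable₂ W ∧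
      ∀ a : α, {t : ℕ | W a t = true}.encard = (A a).encard := by
  obtain ⟨h, hh, hA_dom⟩ := hA.exists_computable_code_dom_eq
  refine ⟨fun a => haltsFirstAt (h a),
    computable₂_haltsFirstAt.comp (hh.comp Computable.fst) Computable.snd, fun a => ?_⟩
  rw [← hA_dom]
  exact Set.encard_congr (bijOn_unpair_fst_haltsFirstAt (h a)).equiv

theorem PRGiven.partrec₂ {G : Word → PRFun} (hG : PRGiven G) :
    Partrec₂ fun p : Word => (G p).val := by
  obtain ⟨h, hh, hG⟩ := hG
  simp only [hG]
  exact Code.eval_part.comp ((Computable.ofNat Code).comp (hh.comp Computable.fst)) Computable.snd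

theorem prGiven_eval {h : Word → Code} (hh : Computable h) :
    PRGiven fun p => ⟨(h p).eval, Code.exists_code.2 ⟨h p, rfl⟩⟩ :=
  ⟨fun p => Encodable.encode (h p), Computable.encode.comp hh, fun p => by simp [phi]⟩

theorem StronglyUniversalEnum.isCardUniversal {U : Word → PRFun} (hU : StronglyUniversalEnum U) :
    IsCardUniversal fun p => {x : ℕ | ((U p).val x).Dom} := by
  obtain ⟨hU_given, comp, -, -, h_universal, h_length⟩ := hU
  refine ⟨uniformlyRE_dom hU_given.partrec₂, fun B hB => ?_⟩
  obtain ⟨h, hh, hB_dom⟩ := hB.exists_computable_code_dom_eq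
  obtain ⟨e, he⟩ := h_universal _ (prGiven_eval hh)
  obtain ⟨c, hc⟩ := h_length e
  exact ⟨comp e, c, fun p => ⟨by simp only [he, hB_dom], hc p⟩⟩

theorem StronglyUniversalPartrec.isCardUniversal {V : Word → ℕ →. ℕ}
    (hV : StronglyUniversalPartrec V) : IsCardUniversal fun p => {t : ℕ | (V p t).Dom} := by
  obtain ⟨hV_partrec, comp, -, -, h_universal, h_length⟩ := hV
  refine ⟨uniformlyRE_dom hV_partrec, fun B hB => ?_⟩
  obtain ⟨f, hf, hB_dom⟩ := hB.exists_partrec₂_dom_eq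
  obtain ⟨e, he⟩ := h_universal f hf
  obtain ⟨c, hc⟩ := h_length e
  exact ⟨comp e, c, fun p => ⟨by simp only [he, hB_dom], hc p⟩⟩

theorem StronglyUniversalUnary.isCardUniversal {M : Word → ℕ → Bool}
    (hM : StronglyUniversalUnary M) : IsCardUniversal fun p => {t : ℕ | M p t = true} := by
  obtain ⟨hM_computable, comp, -, h_universal, h_length⟩ := hM
  refine ⟨uniformlyRE_of_computable₂ hM_computable, fun B hB => ?_⟩
  obtain ⟨W, hW, hB_encard⟩ := hB.exists_computable₂_encard_eq
  obtain ⟨e, he⟩ := h_universal W hW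
  obtain ⟨c, hc⟩ := h_length e
  exact ⟨comp e, c, fun p => ⟨(he p).trans (hB_encard p), hc p⟩⟩

/-- `K^ℕ_card =ct K^∞`, where the emission of an output symbol at step `t` is read either as
convergence of `V(p,t)` or as a decidable event of a step-by-step computation. -/
theorem stmt13 (U : Word → PRFun) (hU : StronglyUniversalEnum U) :
    (∀ V : Word → ℕ →. ℕ, StronglyUniversalPartrec V → EqCt (Kcard U) (KInf V)) ∧
    (∀ M : Word → ℕ → Bool, StronglyUniversalUnary M → EqCt (Kcard U) (KInfStep M)) :=
  ⟨fun _ hV => hU.isCardUniversal.eqCt hV.isCardUniversal,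
    fun _ hM => hU.isCardUniversal.eqCt hM.isCardUniversal⟩
end
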